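/- arXiv:2204.02108 — 2 statements merged into one kernel-verified Lean document; each statement's English description precedes it below -/
import Mathlib

section
/- Success at k = 1: Let σ be a finite relational signature. For all r, q ∈ ℕ ∪ {∞}, every first-order sentence φ over σ that is preserved under ≼_{r,q,1} over the class of all finite σ-structures is equivalent over the class of all finite σ-structures to an existential local sentence. -/
open FirstOrder FirstOrder.Language

universe u v w

namespace Gaifman

/-- Two elements are adjacent in the Gaifman graph of a structure: they are distinct and
occur together in some tuple belonging to some relation. -/
def Adj (L : FirstOrder.Language.{u, u}) (M : Type u) [L.Structure M] (a b : M) : Prop :=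
  a ≠ b ∧ ∃ (n : ℕ) (R : L.Relations n) (t : Fin n → M),
    Structure.RelMap R t ∧ a ∈ Set.range t ∧ b ∈ Set.range t

/-- `CloseLE L M r a b` holds iff the Gaifman distance from `a` to `b` is at most `r`. -/
def CloseLE (L : FirstOrder.Language.{u, u}) (M : Type u) [L.Structure M] :
    ℕ → M → M → Prop
  | 0, a, b => a = b
  | r + 1, a, b => CloseLE L M r a b ∨ ∃ c, CloseLE L M r a c ∧ Adj L M c b

lemma closeLE_self (L : FirstOrder.Language.{u, u}) (M : Type u) [L.Structure M] :
    ∀ (r : ℕ) (a : M), CloseLE L M r a a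
  | 0, _ => rfl
  | r + 1, a => Or.inl (closeLE_self L M r a)

/-- The `r`-neighborhood of a tuple: all elements at Gaifman distance at most `r`
from some component of the tuple. -/
def Ball (L : FirstOrder.Language.{u, u}) {M : Type u} [L.Structure M] {m : ℕ}
    (a : Fin m → M) (r : ℕ) : Set M :=
  {x | ∃ i, CloseLE L M r (a i) x}

lemma self_mem_ball (L : FirstOrder.Language.{u, u}) {M : Type u} [L.Structure M] {m : ℕ}
    (a : Fin m → M) (r : ℕ) (i : Fin m) :
    a i ∈ Ball L a r := ⟨i, closeLE_self L M r (a i)⟩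

/-- The substructure induced on a subset of a structure over a relational language. -/
def inducedStructure (L : FirstOrder.Language.{u, u}) [L.IsRelational] {M : Type u}
    [L.Structure M] (s : Set M) : L.Structure s where
  funMap {n} f _ := isEmptyElim f
  RelMap {n} R t := Structure.RelMap R fun i => (t i : M)

/-- A formula is `r`-local if its truth at a tuple only depends on the induced substructure on
the `r`-neighborhood of the tuple. -/
def IsLocal {L : FirstOrder.Language.{u, u}} [L.IsRelational] (r : ℕ) {m : ℕ}
    (φ : L.Formula (Fin m)) : Prop :=
  ∀ (M : Type u) [L.Structure M] (a : Fin m → M),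
    φ.Realize a ↔
      (letI := inducedStructure L (Ball L a r)
       φ.Realize fun i => (⟨a i, self_mem_ball L a r i⟩ : Ball L a r))

/-- Quantifier rank of a (bounded) formula. -/
def qr {L : FirstOrder.Language.{u, u}} {α : Type v} : ∀ {n : ℕ}, L.BoundedFormula α n → ℕ
  | _, .falsum => 0
  | _, .equal _ _ => 0
  | _, .rel _ _ => 0
  | _, .imp f g => max (qr f) (qr g)
  | _, .all f => qr f + 1

/-- The components of a tuple are at pairwise Gaifman distance greater than `s`. -/
def Far (L : FirstOrder.Language.{u, u}) (M : Type u) [L.Structure M] (s : ℕ) {m : ℕ}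
    (a : Fin m → M) : Prop :=
  ∀ i j : Fin m, i ≠ j → ¬ CloseLE L M s (a i) (a j)

/-- `A ≼_{r,q,k} B` : every sentence `∃ x₁ … x_k, τ` with `τ` an `r`-local formula of
quantifier rank at most `q` that holds in `A` also holds in `B`. -/
def LocLE (L : FirstOrder.Language.{u, u}) [L.IsRelational] (r q k : ℕ) (M N : Type u)
    [L.Structure M] [L.Structure N] : Prop :=
  ∀ τ : L.Formula (Fin k), IsLocal r τ → qr τ ≤ q →
    (∃ a : Fin k → M, τ.Realize a) → ∃ b : Fin k → N, τ.Realize b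

/-- The preorder `≼_{r,q,k}` with radius and rank parameters in `ℕ ∪ {∞}`: the intersection
over all finite parameters below the given ones. -/
def LocLEE (L : FirstOrder.Language.{u, u}) [L.IsRelational] (r q : ℕ∞) (k : ℕ)
    (M N : Type u) [L.Structure M] [L.Structure N] : Prop :=
  ∀ r' q' : ℕ, (r' : ℕ∞) ≤ r → (q' : ℕ∞) ≤ q → LocLE L r' q' k M N

/-- Local elementary embedding. -/
def IsLocalElemEmb (L : FirstOrder.Language.{u, u}) [L.IsRelational] {M N : Type u}
    [L.Structure M] [L.Structure N] (h : M → N) : Prop :=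
  ∀ (k r : ℕ) (a : Fin k → M) (φ : L.Formula (Fin k)), IsLocal r φ →
    (φ.Realize a ↔ φ.Realize (h ∘ a))

/-- Disjoint union of two structures over a relational language. -/
def sumStructure (L : FirstOrder.Language.{u, u}) [L.IsRelational] (M N : Type u)
    [L.Structure M] [L.Structure N] : L.Structure (M ⊕ N) where
  funMap {n} f _ := isEmptyElim f
  RelMap {n} R t :=
    (∃ tm : Fin n → M, t = Sum.inl ∘ tm ∧ Structure.RelMap R tm) ∨
    (∃ tn : Fin n → N, t = Sum.inr ∘ tn ∧ Structure.RelMap R tn)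

/-- A bundled `L`-structure. -/
structure Struc (L : FirstOrder.Language.{u, u}) : Type (u + 1) where
  carrier : Type u
  str : L.Structure carrier

attribute [instance] Struc.str

/-- The `(q,r)`-local type of a tuple. -/
def localType (L : FirstOrder.Language.{u, u}) [L.IsRelational] (r q : ℕ) {M : Type u}
    [L.Structure M] {m : ℕ} (a : Fin m → M) : Set (L.Formula (Fin m)) :=
  {τ | IsLocal r τ ∧ qr τ ≤ q ∧ τ.Realize a}

/-- The collection of `(q,r)`-local types of tuples of at most `k` elements. -/
def Specter (L : FirstOrder.Language.{u, u}) [L.IsRelational] (r q k : ℕ) (M : Type u)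
    [L.Structure M] : Set (Σ m : ℕ, Set (L.Formula (Fin m))) :=
  {p | ∃ m, m ≤ k ∧ ∃ a : Fin m → M, p = ⟨m, localType L r q a⟩}

/-- The data of a basic local sentence
`∃ x₁ … x_k, (⋀_{i ≠ j} d(xᵢ,xⱼ) > 2r ∧ ⋀ᵢ ψ(xᵢ))`. -/
structure BasicLocal (L : FirstOrder.Language.{u, u}) [L.IsRelational] where
  k : ℕ
  r : ℕ
  ψ : L.Formula (Fin 1)
  isLocal : IsLocal r ψ

/-- Truth of a basic local sentence in a structure. -/
def BasicLocal.Holds {L : FirstOrder.Language.{u, u}} [L.IsRelational] (b : BasicLocal L)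
    (M : Type u) [L.Structure M] : Prop :=
  ∃ a : Fin b.k → M, Far L M (2 * b.r) a ∧ ∀ i, b.ψ.Realize fun _ => a i

/-- The data of an asymmetric basic local sentence
`∃ x₁ … x_k, (⋀_{i ≠ j} d(xᵢ,xⱼ) > 2r ∧ ⋀ᵢ ψᵢ(xᵢ))`. -/
structure AsymBasicLocal (L : FirstOrder.Language.{u, u}) [L.IsRelational] where
  k : ℕ
  r : ℕ
  ψ : Fin k → L.Formula (Fin 1)
  isLocal : ∀ i, IsLocal r (ψ i)

/-- Truth of an asymmetric basic local sentence in a structure. -/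
def AsymBasicLocal.Holds {L : FirstOrder.Language.{u, u}} [L.IsRelational]
    (d : AsymBasicLocal L) (M : Type u) [L.Structure M] : Prop :=
  ∃ a : Fin d.k → M, Far L M (2 * d.r) a ∧ ∀ i, (d.ψ i).Realize fun _ => a i

/-- Positive Boolean combinations (conjunction and disjunction only). -/
inductive PosBool (α : Type w) : Type w
  | base : α → PosBool α
  | conj : PosBool α → PosBool α → PosBool α
  | disj : PosBool α → PosBool α → PosBool α

/-- Evaluation of a positive Boolean combination against a truth assignment. -/
def PosBool.Eval {α : Type w} (v : α → Prop) : PosBool α → Prop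
  | .base a => v a
  | .conj p q => p.Eval v ∧ q.Eval v
  | .disj p q => p.Eval v ∨ q.Eval v

/-- `φ` is equivalent over the class `C` to an existential local sentence `∃ x⃗, τ(x⃗)`. -/
def EquivToExistLocal {L : FirstOrder.Language.{u, u}} [L.IsRelational]
    (C : Set (Struc L)) (φ : L.Sentence) : Prop :=
  ∃ (k r : ℕ) (τ : L.Formula (Fin k)), IsLocal r τ ∧
    ∀ S ∈ C, (S.carrier ⊨ φ ↔ ∃ a : Fin k → S.carrier, τ.Realize a)

/-- `A ⊆ᵢ B` : `A` is isomorphic to an induced substructure of `B`. -/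
def SubInd {L : FirstOrder.Language.{u, u}} (A B : Struc L) : Prop :=
  Nonempty (A.carrier ↪[L] B.carrier)

/-- A hereditary class: closed under induced substructures. -/
def Hereditary {L : FirstOrder.Language.{u, u}} (C : Set (Struc L)) : Prop :=
  ∀ B ∈ C, ∀ A : Struc L, SubInd A B → A ∈ C

/-- `φ` is preserved under extensions over `C`. -/
def PreservedUnderExt {L : FirstOrder.Language.{u, u}} (C : Set (Struc L))
    (φ : L.Sentence) : Prop :=
  ∀ A ∈ C, ∀ B ∈ C, A.carrier ⊨ φ → SubInd A B → B.carrier ⊨ φ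

/-- `C` is closed under disjoint unions with finite structures. -/
def ClosedUnderDisjointUnions {L : FirstOrder.Language.{u, u}} [L.IsRelational]
    (C : Set (Struc L)) : Prop :=
  ∀ A ∈ C, ∀ B : Struc L, Finite B.carrier →
    (⟨A.carrier ⊕ B.carrier, sumStructure L A.carrier B.carrier⟩ : Struc L) ∈ C

/-- `Balls(C, r, k)` : the structures isomorphic to an `r`-neighborhood of a tuple of at most
`k` elements of a structure of `C`. -/
def BallsClass {L : FirstOrder.Language.{u, u}} [L.IsRelational] (C : Set (Struc L))
    (r k : ℕ) : Set (Struc L) :=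
  {T | ∃ A ∈ C, ∃ m, m ≤ k ∧ ∃ a : Fin m → A.carrier,
    letI := inducedStructure L (Ball L a r)
    Nonempty (T.carrier ≃[L] ↥(Ball L a r))}

/-- A `⊆ᵢ`-minimal model of `φ` in `C`: a model in `C` no proper induced substructure of
which satisfies `φ`. -/
def IsMinimalModel {L : FirstOrder.Language.{u, u}} [L.IsRelational] (C : Set (Struc L))
    (φ : L.Sentence) (A : Struc L) : Prop :=
  A ∈ C ∧ A.carrier ⊨ φ ∧
    ∀ s : Set A.carrier,
      (letI := inducedStructure L s
       (↥s) ⊨ φ) → s = Set.univ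

/-- Preservation under extensions holds over the class `D`: every sentence preserved under
extensions over `D` is equivalent over `D` to an existential sentence. -/
def PresExtHolds {L : FirstOrder.Language.{u, u}} [L.IsRelational]
    (D : Set (Struc L)) : Prop :=
  ∀ φ : L.Sentence, PreservedUnderExt D φ →
    ∃ (n : ℕ) (θ : L.Formula (Fin n)), θ.IsQF ∧
      ∀ S ∈ D, (S.carrier ⊨ φ ↔ ∃ a : Fin n → S.carrier, θ.Realize a)

end Gaifman

open Gaifman

namespace GF

/-- Embeddings of relational structures. -/
structure Emb (L : FirstOrder.Language.{u, u}) {M N : Type u} [L.Structure M] [L.Structure N]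
    (f : M → N) : Prop where
  inj : Function.Injective f
  rel : ∀ (n : ℕ) (R : L.Relations n) (t : Fin n → M),
    Structure.RelMap R (fun i => f (t i)) ↔ Structure.RelMap R t

section basic
variable {L : FirstOrder.Language.{u, u}} {M N : Type u} [L.Structure M] [L.Structure N]

lemma adj_symm {a b : M} (h : Adj L M a b) : Adj L M b a := by
  obtain ⟨h, n, R, t, h1, h2, h3⟩ := h
  exact ⟨h.symm, n, R, t, h1, h3, h2⟩

lemma close_trans {r s : ℕ} {a b c : M} (h : CloseLE L M r a b) (h' : CloseLE L M s b c) :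
    CloseLE L M (r + s) a c := by
  induction s generalizing c with
  | zero => cases h'; exact h
  | succ s ih =>
    rcases h' with h' | ⟨d, h1, h2⟩
    · exact Or.inl (ih h')
    · exact Or.inr ⟨d, ih h1, h2⟩

lemma close_symm {r : ℕ} {a b : M} (h : CloseLE L M r a b) : CloseLE L M r b a := by
  induction r generalizing b with
  | zero => cases h; rfl
  | succ r ih =>
    rcases h with h | ⟨d, h1, h2⟩
    · exact Or.inl (ih h)
    · have := close_trans (r := 1) (Or.inr ⟨b, rfl, adj_symm h2⟩) (ih h1)
      rwa [add_comm] at this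

lemma close_mono {r s : ℕ} (hrs : r ≤ s) {a b : M} (h : CloseLE L M r a b) :
    CloseLE L M s a b := by
  induction hrs with
  | refl => exact h
  | step _ ih => exact Or.inl ih

lemma close_of_rel {n : ℕ} (R : L.Relations n) (t : Fin n → M) (h : Structure.RelMap R t)
    (i j : Fin n) : CloseLE L M 1 (t i) (t j) := by
  by_cases e : t i = t j
  · exact Or.inl e
  · exact Or.inr ⟨t i, rfl, e, n, R, t, h, ⟨i, rfl⟩, ⟨j, rfl⟩⟩

lemma Emb.adj {f : M → N} (hf : Emb L f) {a b : M} (h : Adj L M a b) :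
    Adj L N (f a) (f b) := by
  obtain ⟨h, n, R, t, h1, ⟨i, rfl⟩, ⟨j, rfl⟩⟩ := h
  exact ⟨fun e => h (hf.inj e), n, R, _, (hf.rel n R t).2 h1, ⟨i, rfl⟩, ⟨j, rfl⟩⟩

lemma Emb.close {f : M → N} (hf : Emb L f) {r : ℕ} {a b : M} (h : CloseLE L M r a b) :
    CloseLE L N r (f a) (f b) := by
  induction r generalizing b with
  | zero => cases h; rfl
  | succ r ih =>
    rcases h with h | ⟨d, h1, h2⟩
    · exact Or.inl (ih h)
    · exact Or.inr ⟨f d, ih h1, hf.adj h2⟩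

lemma Emb.close' {f : M → N} (hf : Emb L f) {r : ℕ} {a b : M}
    (hr : ∀ y, CloseLE L N r (f a) y → y ∈ Set.range f)
    (h : CloseLE L N r (f a) (f b)) : CloseLE L M r a b := by
  induction r generalizing b with
  | zero => exact hf.inj h
  | succ r ih =>
    rcases h with h | ⟨d, h1, h2⟩
    · exact Or.inl (ih (fun y hy => hr y (Or.inl hy)) h)
    · obtain ⟨c, rfl⟩ := hr d (Or.inl h1)
      refine Or.inr ⟨c, ih (fun y hy => hr y (Or.inl hy)) h1, ?_⟩
      obtain ⟨hne, n, R, t, ht, ⟨i, hi⟩, ⟨j, hj⟩⟩ := h2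
      have hin : ∀ k, t k ∈ Set.range f := by
        intro k
        apply hr
        have := close_of_rel R t ht i k
        rw [hi] at this
        exact close_trans h1 this
      choose s hs using hin
      have hts : t = fun i => f (s i) := by funext i; exact (hs i).symm
      subst hts
      exact ⟨fun e => hne (by rw [e]), n, R, s, (hf.rel n R s).1 ht, ⟨i, hf.inj hi⟩,
        ⟨j, hf.inj hj⟩⟩

end basic

/-- Queries. -/
abbrev Query (L : FirstOrder.Language.{u, u}) (α : Type) :=
  ∀ (M : Type u) [L.Structure M], (α → M) → Prop

section Queries
variable {L : FirstOrder.Language.{u, u}} {α β : Type}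

/-- First-order definable queries. -/
def Dfb (Q : Query L α) : Prop :=
  ∃ f : L.Formula α, ∀ (M : Type u) [L.Structure M] (v : α → M), f.Realize v ↔ Q M v

lemma Dfb.not {Q : Query L α} (h : Dfb Q) : Dfb (L := L) (fun M _ v => ¬ Q M v) := by
  obtain ⟨f, hf⟩ := h
  exact ⟨f.not, fun M _ v => by rw [Formula.realize_not, hf]⟩

lemma Dfb.and {Q Q' : Query L α} (h : Dfb Q) (h' : Dfb Q') :
    Dfb (L := L) (fun M _ v => Q M v ∧ Q' M v) := by
  obtain ⟨f, hf⟩ := h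
  obtain ⟨f', hf'⟩ := h'
  exact ⟨f ⊓ f', fun M _ v => by rw [Formula.realize_inf, hf, hf']⟩

lemma Dfb.or {Q Q' : Query L α} (h : Dfb Q) (h' : Dfb Q') :
    Dfb (L := L) (fun M _ v => Q M v ∨ Q' M v) := by
  obtain ⟨f, hf⟩ := h
  obtain ⟨f', hf'⟩ := h'
  exact ⟨f ⊔ f', fun M _ v => by rw [Formula.realize_sup, hf, hf']⟩

lemma Dfb.all {ι : Type*} [Finite ι] {Q : ι → Query L α} (h : ∀ i, Dfb (Q i)) :
    Dfb (L := L) (fun M _ v => ∀ i, Q i M v) := by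
  choose f hf using h
  exact ⟨Formula.iInf f, fun M _ v => by rw [Formula.realize_iInf]; simp only [hf]⟩

lemma Dfb.any {ι : Type*} [Finite ι] {Q : ι → Query L α} (h : ∀ i, Dfb (Q i)) :
    Dfb (L := L) (fun M _ v => ∃ i, Q i M v) := by
  choose f hf using h
  exact ⟨Formula.iSup f, fun M _ v => by rw [Formula.realize_iSup]; simp only [hf]⟩

lemma Dfb.relabel {Q : Query L α} (h : Dfb Q) (g : α → β) :
    Dfb (L := L) (fun M _ (v : β → M) => Q M (v ∘ g)) := by
  obtain ⟨f, hf⟩ := h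
  exact ⟨f.relabel g, fun M _ v => by rw [Formula.realize_relabel, hf]⟩

lemma Dfb.exs [Finite β] {Q : Query L (α ⊕ β)} (h : Dfb Q) :
    Dfb (L := L) (fun M _ v => ∃ x : β → M, Q M (Sum.elim v x)) := by
  obtain ⟨f, hf⟩ := h
  exact ⟨f.iExs β, fun M _ v => by rw [Formula.realize_iExs]; simp only [hf]⟩

lemma Dfb.ex {Q : Query L (α ⊕ Unit)} (h : Dfb Q) :
    Dfb (L := L) (fun M _ v => ∃ x : M, Q M (Sum.elim v (fun _ => x))) := by
  obtain ⟨f, hf⟩ := h.exs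
  refine ⟨f, fun M _ v => (hf M v).trans ⟨fun ⟨x, hx⟩ => ⟨x (), hx⟩, fun ⟨x, hx⟩ => ⟨_, hx⟩⟩⟩

lemma Dfb.exSnoc {m : ℕ} {Q : Query L (Fin (m + 1))} (h : Dfb Q) :
    Dfb (L := L) (fun M _ v => ∃ x : M, Q M (Fin.snoc (α := fun _ => M) v x)) := by
  have := (h.relabel (Fin.lastCases (Sum.inr ()) Sum.inl : Fin (m + 1) → Fin m ⊕ Unit)).ex
  obtain ⟨f, hf⟩ := this
  refine ⟨f, fun M _ v => (hf M v).trans ?_⟩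
  refine exists_congr fun x => ?_
  have : (Sum.elim v (fun _ => x)) ∘ (Fin.lastCases (Sum.inr ()) Sum.inl :
      Fin (m + 1) → Fin m ⊕ Unit) = Fin.snoc (α := fun _ => M) v x := by
    funext i
    refine Fin.lastCases ?_ (fun i => ?_) i <;> simp
  rw [this]

lemma Dfb.congr {Q Q' : Query L α} (h : Dfb Q)
    (e : ∀ (M : Type u) [L.Structure M] v, Q M v ↔ Q' M v) : Dfb Q' := by
  obtain ⟨f, hf⟩ := h
  exact ⟨f, fun M _ v => (hf M v).trans (e M v)⟩

lemma Dfb.eq (i j : α) : Dfb (L := L) (fun M _ v => v i = v j) :=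
  ⟨(Term.var i).equal (Term.var j), fun M _ v => by simp [Formula.realize_equal]⟩

lemma Dfb.rel {n : ℕ} (R : L.Relations n) (g : Fin n → α) :
    Dfb (L := L) (fun M _ v => Structure.RelMap R (fun i => v (g i))) :=
  ⟨R.formula fun i => Term.var (g i), fun M _ v => by simp [Formula.realize_rel]⟩

lemma Dfb.adj [Finite (Σ n, L.Relations n)] (i j : α) :
    Dfb (L := L) (fun M _ v => Adj L M (v i) (v j)) := by
  have h2 := Dfb.any (L := L) (α := α) (ι := Σ n, L.Relations n)
    (Q := fun p M _ v => ∃ t : Fin p.1 → M, (Structure.RelMap p.2 t ∧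
      ((∃ k, v i = t k) ∧ ∃ k, v j = t k)))
    (fun p => (((Dfb.rel (L := L) (α := α ⊕ Fin p.1) p.2 Sum.inr).and
      ((Dfb.any fun k : Fin p.1 => Dfb.eq (Sum.inl i) (Sum.inr k)).and
       (Dfb.any fun k : Fin p.1 => Dfb.eq (Sum.inl j) (Sum.inr k)))).exs))
  refine ((Dfb.eq i j).not.and h2).congr fun M _ v => ?_
  refine and_congr Iff.rfl ⟨?_, ?_⟩
  · rintro ⟨⟨n, R⟩, t, h, ⟨k, hk⟩, ⟨l, hl⟩⟩
    exact ⟨n, R, t, h, ⟨k, hk.symm⟩, ⟨l, hl.symm⟩⟩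
  · rintro ⟨n, R, t, h, ⟨k, hk⟩, ⟨l, hl⟩⟩
    exact ⟨⟨n, R⟩, t, h, ⟨k, hk.symm⟩, ⟨l, hl.symm⟩⟩

lemma Dfb.close [Finite (Σ n, L.Relations n)] (r : ℕ) : ∀ {α : Type} (i j : α),
    Dfb (L := L) (fun M _ v => CloseLE L M r (v i) (v j)) := by
  induction r with
  | zero => exact fun i j => Dfb.eq i j
  | succ r ih =>
    intro α i j
    exact (ih i j).or ((ih (α := α ⊕ Unit) (Sum.inl i) (Sum.inr ())).and
      (Dfb.adj (Sum.inr ()) (Sum.inl j))).ex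

/-- Strong locality of queries. -/
def SLoc (r : ℕ) (Q : Query L α) : Prop :=
  ∀ (M N : Type u) [L.Structure M] [L.Structure N] (f : M → N), Emb L f → ∀ v : α → M,
    (∀ i y, CloseLE L N r (f (v i)) y → y ∈ Set.range f) → (Q M v ↔ Q N (f ∘ v))

lemma SLoc.mono {r s : ℕ} (hrs : r ≤ s) {Q : Query L α} (h : SLoc r Q) : SLoc s Q :=
  fun M N _ _ f hf v hv => h M N f hf v fun i y hy => hv i y (close_mono hrs hy)

lemma SLoc.isLocal [L.IsRelational] {r m : ℕ} {Q : Query L (Fin m)} (h : SLoc r Q)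
    {f : L.Formula (Fin m)}
    (hf : ∀ (M : Type u) [L.Structure M] v, f.Realize v ↔ Q M v) : IsLocal r f := by
  intro M _ a
  let _ := inducedStructure L (Ball L a r)
  have := h (Ball L a r) M Subtype.val ⟨Subtype.val_injective, fun n R t => Iff.rfl⟩
    (fun i => (⟨a i, self_mem_ball L a r i⟩ : Ball L a r))
    (fun i y hy => ⟨⟨y, i, hy⟩, rfl⟩)
  rw [hf M a]
  exact this.symm.trans (hf (Ball L a r) _).symm

end Queries

/-- Local back-and-forth equivalence. -/
def LE (L : FirstOrder.Language.{u, u}) {M N : Type u} [L.Structure M] [L.Structure N] :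
    ℕ → Set (M × N) → Prop
  | 0, P => (∀ p ∈ P, ∀ p' ∈ P, p.1 = p'.1 ↔ p.2 = p'.2) ∧
      ∀ (n : ℕ) (R : L.Relations n) (t : Fin n → M × N), (∀ i, t i ∈ P) →
        (Structure.RelMap R (fun i => (t i).1) ↔ Structure.RelMap R (fun i => (t i).2))
  | q + 1, P => LE L q P ∧
      (∀ c, (∃ p ∈ P, CloseLE L M (2 ^ q) p.1 c) →
        ∃ d, (∃ p ∈ P, CloseLE L N (2 ^ q) p.2 d) ∧ LE L q (insert (c, d) P)) ∧
      (∀ d, (∃ p ∈ P, CloseLE L N (2 ^ q) p.2 d) →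
        ∃ c, (∃ p ∈ P, CloseLE L M (2 ^ q) p.1 c) ∧ LE L q (insert (c, d) P))

section LE
variable {L : FirstOrder.Language.{u, u}} {M N : Type u} [L.Structure M] [L.Structure N]

lemma LE.mono {q q' : ℕ} (h : q' ≤ q) {P : Set (M × N)} (H : LE L q P) : LE L q' P := by
  induction h with
  | refl => exact H
  | step _ ih => exact ih H.1

lemma LE.swap {q : ℕ} {P : Set (M × N)} (H : LE L q P) : LE L q (Prod.swap ⁻¹' P) := by
  induction q generalizing P with
  | zero =>
    refine ⟨fun p hp p' hp' => (H.1 _ hp _ hp').symm, fun n R t ht => ?_⟩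
    exact (H.2 n R (fun i => (t i).swap) ht).symm
  | succ q ih =>
    obtain ⟨h0, h1, h2⟩ := H
    have key : ∀ (c : M) (d : N), (insert (d, c) (Prod.swap ⁻¹' P)) =
        Prod.swap ⁻¹' (insert (c, d) P) := by
      intro c d; ext ⟨x, y⟩; simp [and_comm]
    refine ⟨ih h0, ?_, ?_⟩
    · rintro d ⟨p, hp, hc⟩
      obtain ⟨c, ⟨p', hp', hc'⟩, hle⟩ := h2 d ⟨p.swap, hp, hc⟩
      refine ⟨c, ⟨p'.swap, by simpa using hp', hc'⟩, ?_⟩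
      rw [key]; exact ih hle
    · rintro c ⟨p, hp, hc⟩
      obtain ⟨d, ⟨p', hp', hc'⟩, hle⟩ := h1 c ⟨p.swap, hp, hc⟩
      refine ⟨d, ⟨p'.swap, by simpa using hp', hc'⟩, ?_⟩
      rw [key]; exact ih hle

lemma LE.diag {q : ℕ} {P : Set (M × M)} (H : ∀ p ∈ P, p.1 = p.2) : LE L q P := by
  induction q generalizing P with
  | zero =>
    refine ⟨fun p hp p' hp' => by rw [H p hp, H p' hp'], fun n R t ht => ?_⟩
    have : (fun i => (t i).1) = fun i => (t i).2 := funext fun i => H _ (ht i)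
    rw [this]
  | succ q ih =>
    have key : ∀ c : M, LE L q (insert (c, c) P) := by
      intro c
      apply ih
      rintro p (rfl | hp)
      · rfl
      · exact H p hp
    refine ⟨ih H, ?_, ?_⟩
    · rintro c ⟨p, hp, hc⟩
      exact ⟨c, ⟨p, hp, H p hp ▸ hc⟩, key c⟩
    · rintro c ⟨p, hp, hc⟩
      exact ⟨c, ⟨p, hp, (H p hp).symm ▸ hc⟩, key c⟩

lemma LE.union {q : ℕ} {P P' : Set (M × N)} (H : LE L q P) (H' : LE L q P')
    (h1 : ∀ p ∈ P, ∀ p' ∈ P', ¬ CloseLE L M (2 ^ q) p.1 p'.1)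
    (h2 : ∀ p ∈ P, ∀ p' ∈ P', ¬ CloseLE L N (2 ^ q) p.2 p'.2) : LE L q (P ∪ P') := by
  induction q generalizing P P' with
  | zero =>
    constructor
    · rintro p (hp | hp) p' (hp' | hp')
      · exact H.1 p hp p' hp'
      · exact iff_of_false (fun e => h1 p hp p' hp' (Or.inl e))
          (fun e => h2 p hp p' hp' (Or.inl e))
      · exact iff_of_false (fun e => h1 p' hp' p hp (Or.inl e.symm))
          (fun e => h2 p' hp' p hp (Or.inl e.symm))
      · exact H'.1 p hp p' hp'
    · intro n R t ht
      by_cases e : ∀ i, t i ∈ P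
      · exact H.2 n R t e
      by_cases e' : ∀ i, t i ∈ P'
      · exact H'.2 n R t e'
      push Not at e e'
      obtain ⟨i, hi⟩ := e
      obtain ⟨j, hj⟩ := e'
      have hi' : t i ∈ P' := (ht i).resolve_left hi
      have hj' : t j ∈ P := (ht j).resolve_right hj
      exact iff_of_false (fun e => h1 _ hj' _ hi' (close_of_rel R _ e j i))
        (fun e => h2 _ hj' _ hi' (close_of_rel R _ e j i))
  | succ q ih =>
    -- one step on the left-hand part
    have hpow : 2 ^ (q + 1) = 2 ^ q + 2 ^ q := by ring
    have hle : 2 ^ q ≤ 2 ^ (q + 1) := Nat.pow_le_pow_right (by norm_num) (by omega)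
    have step : ∀ (P P' : Set (M × N)) (c : M) (d : N), LE L q (insert (c, d) P) → LE L q P' →
        (∀ p ∈ P, ∀ p' ∈ P', ¬ CloseLE L M (2 ^ (q + 1)) p.1 p'.1) →
        (∀ p ∈ P, ∀ p' ∈ P', ¬ CloseLE L N (2 ^ (q + 1)) p.2 p'.2) →
        (∃ p ∈ P, CloseLE L M (2 ^ q) p.1 c) → (∃ p ∈ P, CloseLE L N (2 ^ q) p.2 d) →
        LE L q (insert (c, d) (P ∪ P')) := by
      intro P P' c d hcd hP' h1 h2 ⟨p1, hp1, hc⟩ ⟨p2, hp2, hd⟩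
      rw [← Set.insert_union]
      refine ih hcd hP' ?_ ?_
      · rintro p (rfl | hp) p' hp' hcl
        · exact h1 p1 hp1 p' hp' (hpow ▸ close_trans hc hcl)
        · exact h1 p hp p' hp' (close_mono hle hcl)
      · rintro p (rfl | hp) p' hp' hcl
        · exact h2 p2 hp2 p' hp' (hpow ▸ close_trans hd hcl)
        · exact h2 p hp p' hp' (close_mono hle hcl)
    have h1' : ∀ p ∈ P', ∀ p' ∈ P, ¬ CloseLE L M (2 ^ (q + 1)) p.1 p'.1 :=
      fun p hp p' hp' h => h1 p' hp' p hp (close_symm h)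
    have h2' : ∀ p ∈ P', ∀ p' ∈ P, ¬ CloseLE L N (2 ^ (q + 1)) p.2 p'.2 :=
      fun p hp p' hp' h => h2 p' hp' p hp (close_symm h)
    refine ⟨ih H.1 H'.1 (fun p hp p' hp' h => h1 p hp p' hp' (close_mono hle h))
      (fun p hp p' hp' h => h2 p hp p' hp' (close_mono hle h)), ?_, ?_⟩
    · rintro c ⟨p, hp | hp, hc⟩
      · obtain ⟨d, hd, hcd⟩ := H.2.1 c ⟨p, hp, hc⟩
        refine ⟨d, ?_, step P P' c d hcd H'.1 h1 h2 ⟨p, hp, hc⟩ hd⟩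
        obtain ⟨p2, hp2, hd⟩ := hd
        exact ⟨p2, Or.inl hp2, hd⟩
      · obtain ⟨d, hd, hcd⟩ := H'.2.1 c ⟨p, hp, hc⟩
        refine ⟨d, ?_, Set.union_comm P' P ▸ step P' P c d hcd H.1 h1' h2' ⟨p, hp, hc⟩ hd⟩
        obtain ⟨p2, hp2, hd⟩ := hd
        exact ⟨p2, Or.inr hp2, hd⟩
    · rintro d ⟨p, hp | hp, hd⟩
      · obtain ⟨c, hc, hcd⟩ := H.2.2 d ⟨p, hp, hd⟩
        refine ⟨c, ?_, step P P' c d hcd H'.1 h1 h2 hc ⟨p, hp, hd⟩⟩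
        obtain ⟨p2, hp2, hc⟩ := hc
        exact ⟨p2, Or.inl hp2, hc⟩
      · obtain ⟨c, hc, hcd⟩ := H'.2.2 d ⟨p, hp, hd⟩
        refine ⟨c, ?_, Set.union_comm P' P ▸ step P' P c d hcd H.1 h1' h2' hc ⟨p, hp, hd⟩⟩
        obtain ⟨p2, hp2, hc⟩ := hc
        exact ⟨p2, Or.inr hp2, hc⟩

/-- Embeddings onto unions of connected components. -/
structure CEmb (L : FirstOrder.Language.{u, u}) {M N : Type u} [L.Structure M] [L.Structure N]
    (f : M → N) : Prop extends Emb L f where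
  comp : ∀ (r : ℕ) (x : M) (y : N), CloseLE L N r (f x) y → y ∈ Set.range f

lemma LE.map {M' N' : Type u} [L.Structure M'] [L.Structure N'] {f : M → M'} {g : N → N'}
    (hf : CEmb L f) (hg : CEmb L g) {q : ℕ} {P : Set (M × N)} (H : LE L q P) :
    LE L q (Prod.map f g '' P) := by
  induction q generalizing P with
  | zero =>
    constructor
    · rintro _ ⟨p, hp, rfl⟩ _ ⟨p', hp', rfl⟩
      simpa [hf.inj.eq_iff, hg.inj.eq_iff] using H.1 p hp p' hp'
    · intro n R t ht
      choose s hs hst using ht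
      have : t = fun i => Prod.map f g (s i) := funext fun i => (hst i).symm
      subst this
      have := H.2 n R s hs
      exact (hf.rel n R _).trans (this.trans (hg.rel n R _).symm)
  | succ q ih =>
    refine ⟨ih H.1, ?_, ?_⟩
    · rintro _ ⟨_, ⟨p, hp, rfl⟩, hc⟩
      obtain ⟨c, rfl⟩ := hf.comp _ _ _ hc
      obtain ⟨d, ⟨p', hp', hd⟩, hcd⟩ := H.2.1 c ⟨p, hp, hf.close' (hf.comp _ _) hc⟩
      refine ⟨g d, ⟨_, ⟨p', hp', rfl⟩, hg.close hd⟩, ?_⟩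
      have := ih hcd
      rwa [Set.image_insert_eq] at this
    · rintro _ ⟨_, ⟨p, hp, rfl⟩, hd⟩
      obtain ⟨d, rfl⟩ := hg.comp _ _ _ hd
      obtain ⟨c, ⟨p', hp', hc⟩, hcd⟩ := H.2.2 d ⟨p, hp, hg.close' (hg.comp _ _) hd⟩
      refine ⟨f c, ⟨_, ⟨p', hp', rfl⟩, hf.close hc⟩, ?_⟩
      have := ih hcd
      rwa [Set.image_insert_eq] at this

lemma range_snoc_pair {m : ℕ} (v : Fin m → M) (w : Fin m → N) (c : M) (d : N) :
    Set.range (fun i => ((Fin.snoc (α := fun _ => M) v c i, Fin.snoc (α := fun _ => N) w d i) : M × N))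
      = insert (c, d) (Set.range fun i => (v i, w i)) := by
  ext p
  constructor
  · rintro ⟨i, rfl⟩
    refine Fin.lastCases ?_ (fun i => ?_) i
    · simp
    · right; exact ⟨i, by simp⟩
  · rintro (rfl | ⟨i, rfl⟩)
    · exact ⟨Fin.last m, by simp⟩
    · exact ⟨i.castSucc, by simp⟩

end LE

section Types
variable {L : FirstOrder.Language.{u, u}}

lemma Dfb.iffProp {α : Type} {Q : Query L α} (h : Dfb Q) (p : Prop) :
    Dfb (L := L) (fun M _ v => Q M v ↔ p) := by
  by_cases hp : p
  · exact h.congr fun M _ v => by simp [hp]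
  · exact h.not.congr fun M _ v => by simp [hp]

lemma comp_snoc' {M N : Type u} {m : ℕ} (f : M → N) (v : Fin m → M) (y : M) :
    f ∘ (Fin.snoc (α := fun _ => M) v y) = Fin.snoc (α := fun _ => N) (f ∘ v) (f y) := by
  funext i
  refine Fin.lastCases ?_ (fun i => ?_) i <;> simp

lemma types [Finite (Σ n, L.Relations n)] (q : ℕ) : ∀ m : ℕ,
    ∃ (ι : Type u) (_ : Finite ι) (Q : ι → Query L (Fin m)) (R : ℕ),
      (∀ i, Dfb (Q i)) ∧ (∀ i, SLoc R (Q i)) ∧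
      ∀ (M N : Type u) [L.Structure M] [L.Structure N] (v : Fin m → M) (w : Fin m → N),
        (∀ i, Q i M v ↔ Q i N w) → LE L q (Set.range fun i => (v i, w i)) := by
  induction q with
  | zero =>
    intro m
    refine ⟨ULift.{u} (Fin m × Fin m) ⊕ Σ p : (Σ n, L.Relations n), (Fin p.1 → Fin m),
      inferInstance, Sum.elim (fun x M _ v => v x.down.1 = v x.down.2)
        (fun x M _ v => Structure.RelMap x.1.2 (fun i => v (x.2 i))), 0, ?_, ?_, ?_⟩
    · rintro (x | x)
      · exact Dfb.eq _ _
      · exact Dfb.rel _ _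
    · rintro (x | x) M N _ _ f hf v hv
      · exact hf.inj.eq_iff.symm
      · exact (hf.rel _ _ _).symm
    · intro M N _ _ v w h
      constructor
      · rintro _ ⟨i, rfl⟩ _ ⟨j, rfl⟩
        exact h (Sum.inl ⟨i, j⟩)
      · intro n R t ht
        choose g hg using ht
        have : t = fun i => (v (g i), w (g i)) := funext fun i => (hg i).symm
        subst this
        exact h (Sum.inr ⟨⟨n, R⟩, g⟩)
  | succ q ih =>
    intro m
    obtain ⟨ι₁, _, Q₁, R₁, hd₁, hs₁, hl₁⟩ := ih m
    obtain ⟨ι₂, _, Q₂, R₂, hd₂, hs₂, hl₂⟩ := ih (m + 1)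
    let T : Set ι₂ → Query L (Fin m) := fun S M _ v => ∃ y : M,
      (fun (M : Type u) [L.Structure M] (u : Fin (m + 1) → M) =>
        (∃ i : Fin m, CloseLE L M (2 ^ q) (u i.castSucc) (u (Fin.last m))) ∧
          ∀ j, (Q₂ j M u ↔ j ∈ S)) M (Fin.snoc (α := fun _ => M) v y)
    have hT : ∀ S (M : Type u) [L.Structure M] (v : Fin m → M), T S M v ↔
        ∃ y : M, (∃ i, CloseLE L M (2 ^ q) (v i) y) ∧
          ∀ j, (Q₂ j M (Fin.snoc (α := fun _ => M) v y) ↔ j ∈ S) := by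
      intro S M _ v
      simp [T]
    refine ⟨ι₁ ⊕ Set ι₂, inferInstance, Sum.elim Q₁ T, max R₁ (2 ^ q + R₂), ?_, ?_, ?_⟩
    · rintro (i | S)
      · exact hd₁ i
      · exact ((Dfb.any fun i : Fin m => Dfb.close (L := L) (2 ^ q) i.castSucc (Fin.last m)).and
          (Dfb.all fun j => (hd₂ j).iffProp (j ∈ S))).exSnoc
    · rintro (i | S)
      · exact (hs₁ i).mono (le_max_left _ _)
      · refine SLoc.mono (le_max_right _ _) ?_
        intro M N _ _ f hf v hv
        have key : ∀ y : M, (∃ i, CloseLE L M (2 ^ q) (v i) y) → ∀ j,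
            (Q₂ j M (Fin.snoc (α := fun _ => M) v y) ↔
              Q₂ j N (Fin.snoc (α := fun _ => N) (f ∘ v) (f y))) := by
          rintro y ⟨i, hi⟩ j
          rw [← comp_snoc']
          apply hs₂ j M N f hf
          intro k
          refine Fin.lastCases ?_ (fun k => ?_) k
          · intro z hz
            rw [Fin.snoc_last] at hz
            exact hv i z (close_trans (hf.close hi) hz)
          · intro z hz
            rw [Fin.snoc_castSucc] at hz
            exact hv k z (close_mono (Nat.le_add_left _ _) hz)
        refine (hT S M v).trans (Iff.trans ?_ (hT S N (f ∘ v)).symm)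
        constructor
        · rintro ⟨y, hy, h⟩
          refine ⟨f y, ?_, fun j => (key y hy j).symm.trans (h j)⟩
          obtain ⟨i, hi⟩ := hy
          exact ⟨i, hf.close hi⟩
        · rintro ⟨y, ⟨i, hi⟩, h⟩
          have hi' : CloseLE L N (2 ^ q) (f (v i)) y := hi
          have hball : ∀ z, CloseLE L N (2 ^ q) (f (v i)) z → z ∈ Set.range f :=
            fun z hz => hv i z (close_mono (Nat.le_add_right _ _) hz)
          obtain ⟨x, rfl⟩ := hball y hi'
          have hx : ∃ i, CloseLE L M (2 ^ q) (v i) x := ⟨i, hf.close' hball hi'⟩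
          exact ⟨x, hx, fun j => (key x hx j).trans (h j)⟩
    · intro M N _ _ v w h
      have hcl : ∀ {M : Type u} {N : Type u} [L.Structure M] [L.Structure N]
          (v : Fin m → M) (w : Fin m → N) (_ : ∀ S, T S M v ↔ T S N w) (c : M),
          (∃ i, CloseLE L M (2 ^ q) (v i) c) → ∃ d, (∃ i, CloseLE L N (2 ^ q) (w i) d) ∧
            LE L q (insert (c, d) (Set.range fun i => (v i, w i))) := by
        intro M N _ _ v w h c hc
        let S : Set ι₂ := {j | Q₂ j M (Fin.snoc (α := fun _ => M) v c)}
        have h1 : T S M v := (hT S M v).2 ⟨c, hc, fun j => Iff.rfl⟩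
        obtain ⟨d, hd, hj⟩ := (hT S N w).1 ((h S).1 h1)
        refine ⟨d, hd, ?_⟩
        rw [← range_snoc_pair]
        exact hl₂ M N _ _ fun j => (hj j).symm
      refine ⟨hl₁ M N v w fun i => h (Sum.inl i), ?_, ?_⟩
      · rintro c ⟨_, ⟨i, rfl⟩, hc⟩
        obtain ⟨d, ⟨j, hd⟩, hh⟩ := hcl v w (fun S => h (Sum.inr S)) c ⟨i, hc⟩
        exact ⟨d, ⟨_, ⟨j, rfl⟩, hd⟩, hh⟩
      · rintro d ⟨_, ⟨i, rfl⟩, hd⟩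
        obtain ⟨c, ⟨j, hc⟩, hh⟩ := hcl w v (fun S => (h (Sum.inr S)).symm) d ⟨i, hd⟩
        refine ⟨c, ⟨_, ⟨j, rfl⟩, hc⟩, ?_⟩
        have := hh.swap
        rw [← range_snoc_pair] at this ⊢
        convert this using 1
        ext ⟨x, y⟩
        simp [and_comm]

end Types

section EF
variable {L : FirstOrder.Language.{u, u}} {M N : Type u} [L.Structure M] [L.Structure N]

lemma term_var [L.IsRelational] {m : ℕ} (t : L.Term (Empty ⊕ Fin m)) :
    ∃ i, t = Term.var (Sum.inr i) := by
  cases t with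
  | var x =>
    rcases x with x | i
    · exact x.elim
    · exact ⟨i, rfl⟩
  | func f _ => exact isEmptyElim f

lemma ef [L.IsRelational] (K : ℕ)
    (forth : ∀ m < K, ∀ (w : Fin m → N) (c : M), ∃ d, LE L K {(c, d)} ∧
      ∀ i r, ¬ CloseLE L N r (w i) d)
    (back : ∀ m < K, ∀ (v : Fin m → M) (d : N), ∃ c, LE L K {(c, d)} ∧
      ∀ i r, ¬ CloseLE L M r (v i) c)
    {m : ℕ} (ψ : L.BoundedFormula Empty m) : ∀ (q : ℕ), qr ψ ≤ q → m + q ≤ K →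
      ∀ (v : Fin m → M) (w : Fin m → N), LE L q (Set.range fun i => (v i, w i)) →
        (ψ.Realize default v ↔ ψ.Realize default w) := by
  induction ψ with
  | falsum => intros; rfl
  | equal t₁ t₂ =>
    intro q _ _ v w H
    obtain ⟨i, rfl⟩ := term_var t₁
    obtain ⟨j, rfl⟩ := term_var t₂
    exact (H.mono (Nat.zero_le q)).1 _ ⟨i, rfl⟩ _ ⟨j, rfl⟩
  | rel R ts =>
    intro q _ _ v w H
    choose g hg using fun i => term_var (ts i)
    have : ts = fun i => Term.var (Sum.inr (g i)) := funext hg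
    subst this
    exact (H.mono (Nat.zero_le q)).2 _ R (fun i => (v (g i), w (g i))) fun i => ⟨g i, rfl⟩
  | imp f g ihf ihg =>
    intro q hq hm v w H
    simp only [qr, max_le_iff] at hq
    exact imp_congr (ihf q hq.1 hm v w H) (ihg q hq.2 hm v w H)
  | @all m f ih =>
    intro q hq hm v w H
    obtain ⟨q, rfl⟩ : ∃ q', q = q' + 1 := ⟨q - 1, by simp only [qr] at hq; omega⟩
    have hq' : qr f ≤ q := by simp only [qr] at hq; omega
    have hm' : m + 1 + q ≤ K := by omega
    have hmK : m < K := by omega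
    have hqK : q ≤ K := by omega
    have F : ∀ c : M, ∃ d : N, LE L q (insert (c, d) (Set.range fun i => (v i, w i))) := by
      intro c
      by_cases hc : ∃ p ∈ (Set.range fun i => (v i, w i)), CloseLE L M (2 ^ q) p.1 c
      · obtain ⟨d, _, hd⟩ := H.2.1 c hc
        exact ⟨d, hd⟩
      · obtain ⟨d, hd, hfar⟩ := forth m hmK w c
        refine ⟨d, ?_⟩
        rw [← Set.union_singleton]
        refine LE.union H.1 (hd.mono hqK) ?_ ?_
        · rintro p hp _ rfl h
          exact hc ⟨p, hp, h⟩
        · rintro _ ⟨i, rfl⟩ _ rfl h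
          exact hfar i _ h
    have B : ∀ d : N, ∃ c : M, LE L q (insert (c, d) (Set.range fun i => (v i, w i))) := by
      intro d
      by_cases hc : ∃ p ∈ (Set.range fun i => (v i, w i)), CloseLE L N (2 ^ q) p.2 d
      · obtain ⟨c, _, hd⟩ := H.2.2 d hc
        exact ⟨c, hd⟩
      · obtain ⟨c, hd, hfar⟩ := back m hmK v d
        refine ⟨c, ?_⟩
        rw [← Set.union_singleton]
        refine LE.union H.1 (hd.mono hqK) ?_ ?_
        · rintro _ ⟨i, rfl⟩ _ rfl h
          exact hfar i _ h
        · rintro p hp _ rfl h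
          exact hc ⟨p, hp, h⟩
    have key : ∀ c d, LE L q (insert (c, d) (Set.range fun i => (v i, w i))) →
        (f.Realize default (Fin.snoc (α := fun _ => M) v c) ↔
          f.Realize default (Fin.snoc (α := fun _ => N) w d)) := by
      intro c d h
      refine ih q hq' hm' _ _ ?_
      rw [range_snoc_pair]
      exact h
    constructor
    · intro h d
      obtain ⟨c, hc⟩ := B d
      exact (key c d hc).1 (h c)
    · intro h c
      obtain ⟨d, hd⟩ := F c
      exact (key c d hd).2 (h d)

/-- Agreement on nullary relations. -/
def NullEq (L : FirstOrder.Language.{u, u}) (M N : Type u) [L.Structure M] [L.Structure N] : Prop :=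
  ∀ (R : L.Relations 0) (x : Fin 0 → M) (y : Fin 0 → N),
    Structure.RelMap R x ↔ Structure.RelMap R y

lemma LE.nullEq {q : ℕ} {P : Set (M × N)} (H : LE L q P) : NullEq L M N := by
  intro R x y
  have := (H.mono (Nat.zero_le q)).2 0 R (fun i => i.elim0) (fun i => i.elim0)
  convert this using 2 <;> exact Subsingleton.elim _ _

lemma NullEq.le_empty (h : NullEq L M N) (q : ℕ) : LE L q (∅ : Set (M × N)) := by
  induction q with
  | zero =>
    refine ⟨by simp, fun n R t ht => ?_⟩
    cases n with
    | zero => exact h R _ _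
    | succ n => exact (ht 0).elim
  | succ q ih => exact ⟨ih, by simp, by simp⟩

lemma local_transfer [L.IsRelational] {f : M → N} (hf : CEmb L f) {r m : ℕ}
    {τ : L.Formula (Fin m)} (hτ : IsLocal r τ) (a : Fin m → M) :
    τ.Realize a ↔ τ.Realize (f ∘ a) := by
  rw [hτ M a, hτ N (f ∘ a)]
  let _ := inducedStructure L (Ball L a r)
  let _ := inducedStructure L (Ball L (f ∘ a) r)
  let g : Ball L a r → Ball L (f ∘ a) r := fun x => ⟨f x.1, by
    obtain ⟨i, hi⟩ := x.2
    exact ⟨i, hf.close hi⟩⟩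
  have hg : Function.Bijective g := by
    constructor
    · intro x y h
      exact Subtype.ext (hf.inj (congrArg Subtype.val h))
    · rintro ⟨y, i, hi⟩
      obtain ⟨x, rfl⟩ := hf.comp _ _ _ hi
      exact ⟨⟨x, i, hf.close' (hf.comp _ _) hi⟩, rfl⟩
  let e : Ball L a r ≃[L] Ball L (f ∘ a) r :=
    { Equiv.ofBijective g hg with
      map_fun' := fun F _ => isEmptyElim F
      map_rel' := fun R x => hf.rel _ R (fun i => (x i).1) }
  exact (StrongHomClass.realize_formula e τ
    (v := fun i => (⟨a i, self_mem_ball L a r i⟩ : Ball L a r))).symm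

/-- Disjoint unions. -/
def DU {ι : Type} (X : ι → Struc L) : Type u := Σ i, (X i).carrier

instance {ι : Type} [L.IsRelational] (X : ι → Struc L) : L.Structure (DU X) where
  funMap f _ := isEmptyElim f
  RelMap {n} R t := ∃ (i : ι) (s : Fin n → (X i).carrier), t = (fun j => (⟨i, s j⟩ : DU X)) ∧
    Structure.RelMap R s

lemma DU.close {ι : Type} [L.IsRelational] (X : ι → Struc L) {r : ℕ} {x y : DU X}
    (h : CloseLE L (DU X) r x y) : x.1 = y.1 := by
  induction r generalizing y with
  | zero => cases h; rfl
  | succ r ih =>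
    rcases h with h | ⟨c, h1, h2⟩
    · exact ih h
    · obtain ⟨_, n, R, t, ⟨i, s, rfl, _⟩, ⟨k, hk⟩, ⟨l, hl⟩⟩ := h2
      rw [ih h1, ← hk, ← hl]

lemma DU.cemb {ι : Type} [L.IsRelational] (X : ι → Struc L)
    (hX : ∀ i j, NullEq L (X i).carrier (X j).carrier) (i : ι) :
    CEmb L (M := (X i).carrier) (N := DU X) (fun x => ⟨i, x⟩) where
  inj x y h := by
    have := (Sigma.mk.inj_iff.1 h).2
    exact eq_of_heq this
  rel n R t := by
    constructor
    · rintro ⟨i', s, h, hs⟩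
      cases n with
      | zero => exact (hX i i' R t s).2 hs
      | succ n =>
        have h0 : i = i' := congrArg Sigma.fst (congrFun h 0)
        subst h0
        have : t = s := by
          funext j
          exact eq_of_heq (Sigma.mk.inj_iff.1 (congrFun h j)).2
        rwa [this]
    · intro h
      exact ⟨i, t, rfl, h⟩
  comp r x y h := by
    have := DU.close X h
    obtain ⟨j, y⟩ := y
    dsimp at this
    subst this
    exact ⟨y, rfl⟩

lemma fresh {m K : ℕ} (h : m < K) (g : Fin m → Option (Fin K)) :
    ∃ j, ∀ i, g i ≠ some j := by
  by_contra! hc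
  choose k hk using hc
  have : Function.Injective k := fun a b e => by
    have := hk a
    rw [e, hk b] at this
    exact (Option.some.inj this).symm
  have := Fintype.card_le_of_injective k this
  simp at this
  omega

end EF

lemma mainStep (L : FirstOrder.Language.{u, u}) [L.IsRelational] (r q : ℕ∞) (φ : L.Sentence)
    (hpres : ∀ (A B : Type u) [L.Structure A] [L.Structure B], Finite A → Finite B →
      A ⊨ φ → LocLEE L r q 1 A B → B ⊨ φ)
    (A B : Type u) [L.Structure A] [L.Structure B] (fA : Finite A) (fB : Finite B)
    (hA : A ⊨ φ) (h : ∀ x : A, ∃ y : B, LE L (qr φ + 1) {(x, y)}) : B ⊨ φ := by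
  rcases isEmpty_or_nonempty A with hAe | ⟨⟨a0⟩⟩
  · exact hpres A B fA fB hA fun r' q' _ _ τ _ _ ⟨a, _⟩ => (hAe.false (a 0)).elim
  obtain ⟨b0, hb0⟩ := h a0
  have hAB : NullEq L A B := hb0.nullEq
  have hBB : NullEq L B B := (LE.diag (q := 0) (P := ∅) (by simp)).nullEq
  have hAA : NullEq L A A := (LE.diag (q := 0) (P := ∅) (by simp)).nullEq
  have hBA : NullEq L B A := fun R x y => (hAB R y x).symm
  generalize hK : qr φ + 1 = K at h
  let X : Option (Fin K) → Struc L := fun o => match o with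
    | none => ⟨A, inferInstance⟩
    | some _ => ⟨B, inferInstance⟩
  let Y : Fin K → Struc L := fun _ => ⟨B, inferInstance⟩
  have hX : ∀ i j, NullEq L (X i).carrier (X j).carrier := by
    rintro (_ | i) (_ | j)
    · exact hAA
    · exact hAB
    · exact hBA
    · exact hBB
  have hY : ∀ i j, NullEq L (Y i).carrier (Y j).carrier := fun _ _ => hBB
  have eA : CEmb L (M := A) (N := DU X) (fun x => ⟨none, x⟩) := DU.cemb X hX none
  have eB : ∀ j, CEmb L (M := B) (N := DU X) (fun x => ⟨some j, x⟩) :=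
    fun j => DU.cemb X hX (some j)
  have eY : ∀ j, CEmb L (M := B) (N := DU Y) (fun x => ⟨j, x⟩) := fun j => DU.cemb Y hY j
  have fX : Finite (DU X) := by
    have : ∀ i, Finite (X i).carrier := by
      rintro (_ | i)
      · exact fA
      · exact fB
    exact inferInstanceAs (Finite (Σ i, (X i).carrier))
  have fY : Finite (DU Y) := by
    have : ∀ i, Finite (Y i).carrier := fun _ => fB
    exact inferInstanceAs (Finite (Σ i, (Y i).carrier))
  have hMX : DU X ⊨ φ := by
    refine hpres A (DU X) fA fX hA ?_
    rintro r' q' _ _ τ hτ _ ⟨a, ha⟩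
    exact ⟨_, (local_transfer eA hτ a).1 ha⟩
  have hnXY : NullEq L (DU X) (DU Y) := by
    intro R x y
    have h1 := (eB ⟨0, by omega⟩).rel 0 R (fun i => i.elim0)
    have h2 := (eY ⟨0, by omega⟩).rel 0 R (fun i => i.elim0)
    have h3 := h1.trans h2.symm
    exact Iff.trans (iff_of_eq (congrArg (Structure.RelMap R) (funext fun i : Fin 0 => i.elim0)))
      (h3.trans (iff_of_eq (congrArg (Structure.RelMap R) (funext fun i : Fin 0 => i.elim0))))
  have hNY : DU Y ⊨ φ := by
    refine (ef (M := DU X) (N := DU Y) K ?_ ?_ φ K (by omega) (by omega) default default ?_).1 hMX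
    · intro m hm w c
      obtain ⟨j, hj⟩ := fresh hm (fun i => some (w i).1)
      have hfar : ∀ (d : B) i r, ¬ CloseLE L (DU Y) r (w i) ⟨j, d⟩ := fun d i r hc =>
        hj i (congrArg some (DU.close Y hc))
      obtain ⟨_ | k, c⟩ := c
      · obtain ⟨d, hd⟩ := h c
        refine ⟨⟨j, d⟩, ?_, hfar d⟩
        have := LE.map eA (eY j) hd
        rwa [Set.image_singleton] at this
      · refine ⟨⟨j, c⟩, ?_, hfar c⟩
        have := LE.map (eB k) (eY j) (LE.diag (L := L) (q := K) (P := {((c : B), (c : B))})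
          (by rintro _ rfl; rfl))
        rwa [Set.image_singleton] at this
    · intro m hm v d
      obtain ⟨j, hj⟩ := fresh hm (fun i => (v i).1)
      obtain ⟨k, d⟩ := d
      refine ⟨⟨some j, d⟩, ?_, fun i r hc => hj i (DU.close X hc)⟩
      have := LE.map (eB j) (eY k) (LE.diag (L := L) (q := K) (P := {((d : B), (d : B))})
        (by rintro _ rfl; rfl))
      rwa [Set.image_singleton] at this
    · have := hnXY.le_empty K
      convert this using 1
      exact Set.range_eq_empty _
  refine hpres (DU Y) B fY fB hNY ?_
  rintro r' q' _ _ τ hτ _ ⟨b, hb⟩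
  obtain ⟨j, x⟩ : DU Y := b 0
  refine ⟨fun i => (b i).2, ?_⟩
  refine (local_transfer (eY (b 0).1) hτ _).2 ?_
  convert hb using 1
  funext i
  have : i = 0 := Subsingleton.elim _ _
  subst this
  rfl

end GF

/-- **Success at `k = 1`.** For all `r, q ∈ ℕ ∪ {∞}`, every sentence preserved under
`≼_{r,q,1}` over the class of all finite structures is equivalent over that class to an
existential local sentence. -/
theorem success_at_k_eq_one (L : FirstOrder.Language.{u, u}) [L.IsRelational]
    [Finite (Σ n, L.Relations n)] (r q : ℕ∞) (φ : L.Sentence)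
    (hpres : ∀ (A B : Type u) [L.Structure A] [L.Structure B], Finite A → Finite B →
      A ⊨ φ → LocLEE L r q 1 A B → B ⊨ φ) :
    ∃ (k r' : ℕ) (τ : L.Formula (Fin k)), IsLocal r' τ ∧
      ∀ (M : Type u) [L.Structure M], Finite M →
        (M ⊨ φ ↔ ∃ a : Fin k → M, τ.Realize a) := by
  classical
  by_cases hE : ∃ (E : Type u) (_ : L.Structure E), IsEmpty E ∧ E ⊨ φ
  · obtain ⟨E, _, hE, hφ⟩ := hE
    refine ⟨0, 0, ⊤, ?_, ?_⟩
    · intro M _ a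
      simp
    · intro M _ hM
      have : M ⊨ φ := hpres E M inferInstance hM hφ
        fun r' q' _ _ τ _ _ ⟨a, _⟩ => (hE.false (a 0)).elim
      exact iff_of_true this ⟨fun i => i.elim0, by simp⟩
  obtain ⟨ι, _, Q, R, hd, hs, hl⟩ := GF.types (L := L) (qr φ + 1) 1
  obtain ⟨k, ⟨e⟩⟩ := Finite.exists_equiv_fin (Set ι)
  let spec : ∀ (M : Type u) [L.Structure M], Set (Set ι) := fun M _ =>
    {S | ∃ x : M, ∀ j, (Q j M (fun _ => x) ↔ j ∈ S)}
  let Good : Set (Set (Set ι)) := {s | ∃ (A : Type u) (_ : L.Structure A), Finite A ∧ A ⊨ φ ∧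
    s = spec A}
  let T : GF.Query L (Fin k) := fun M _ v => ∃ s : Good, ∀ S : s.1, ∀ j,
    (Q j M (v ∘ fun _ => e S.1) ↔ j ∈ S.1)
  have hTd : GF.Dfb T := GF.Dfb.any fun s => GF.Dfb.all fun S => GF.Dfb.all fun j =>
    ((hd j).relabel _).iffProp _
  have hTs : GF.SLoc R T := by
    intro M N _ _ f hf v hv
    refine exists_congr fun s => forall_congr' fun S => forall_congr' fun j => ?_
    rw [hs j M N f hf (v ∘ fun _ => e S.1) fun i => hv _]
    rfl
  obtain ⟨τ, hτ⟩ := hTd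
  refine ⟨k, R, τ, hTs.isLocal hτ, fun M _ hM => ?_⟩
  simp only [hτ]
  constructor
  · intro hφ
    have hne : Nonempty M := by
      by_contra hc
      exact hE ⟨M, inferInstance, not_nonempty_iff.1 hc, hφ⟩
    have hx : ∀ S : Set ι, ∃ x : M, S ∈ spec M → ∀ j, (Q j M (fun _ => x) ↔ j ∈ S) := by
      intro S
      by_cases h : S ∈ spec M
      · obtain ⟨x, hx⟩ := h
        exact ⟨x, fun _ => hx⟩
      · exact ⟨hne.some, fun h' => (h h').elim⟩
    choose x hx using hx
    refine ⟨fun i => x (e.symm i), ⟨spec M, M, inferInstance, hM, hφ, rfl⟩, ?_⟩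
    rintro ⟨S, hS⟩ j
    have := hx S hS j
    simpa [Function.comp_def] using this
  · rintro ⟨v, ⟨s, A, _, fA, hA, rfl⟩, hv⟩
    refine GF.mainStep L r q φ hpres A M fA hM hA fun x => ?_
    let S : Set ι := {j | Q j A (fun _ => x)}
    have hS : S ∈ spec A := ⟨x, fun j => Iff.rfl⟩
    refine ⟨v (e S), ?_⟩
    have := hl A M (fun _ => x) (fun _ => v (e S)) fun j => (hv ⟨S, hS⟩ j).symm
    rwa [Set.range_const] at this
end

section
/- Failure at arbitrary quantifier rank: There exists a finite relational signature σ such that for every r ≥ 1 and k ≥ 2 there is a first-order sentence φ over σ that is preserved under ≼_{r,∞,k} over the class of all finite σ-structures but is not equivalent over the class of all finite σ-structures to any existential local sentence. -/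
open FirstOrder FirstOrder.Language

universe u v w

open Gaifman


namespace FailQR

/-- Six binary relation symbols: 0 = hub, 1 = break, 2 = P, 3 = Q, 4 = next, 5 = link. -/
inductive Rels : ℕ → Type
  | mk : Fin 6 → Rels 2

def LL : FirstOrder.Language.{0, 0} := ⟨fun _ => Empty, Rels⟩

instance instRel : LL.IsRelational := fun n => (inferInstance : IsEmpty Empty)

def sym (s : Fin 6) : LL.Relations 2 := Rels.mk s

lemma finite_rels : Finite (Σ n, LL.Relations n) := by
  refine Finite.of_surjective (fun s : Fin 6 => (⟨2, sym s⟩ : Σ n, LL.Relations n)) ?_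
  rintro ⟨n, R⟩
  cases R with
  | mk s => exact ⟨s, rfl⟩

def rl {M : Type} [LL.Structure M] (s : Fin 6) (x y : M) : Prop :=
  Structure.RelMap (sym s) ![x, y]

def Nb {M : Type} [LL.Structure M] (x y : M) : Prop :=
  x = y ∨ ∃ s, rl s x y ∨ rl s y x

lemma relMap_iff {M : Type} [LL.Structure M] (s : Fin 6) (t : Fin 2 → M) :
    Structure.RelMap (sym s) t ↔ rl s (t 0) (t 1) := by
  unfold rl
  have : t = ![t 0, t 1] := by
    funext i; fin_cases i <;> rfl
  rw [← this]

lemma adj_iff {M : Type} [LL.Structure M] (x y : M) :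
    Adj LL M x y ↔ x ≠ y ∧ ∃ s, rl s x y ∨ rl s y x := by
  constructor
  · rintro ⟨hne, n, R, t, hR, ⟨i, hi⟩, ⟨j, hj⟩⟩
    refine ⟨hne, ?_⟩
    cases R with
    | mk s =>
      have h := (relMap_iff s t).1 hR
      refine ⟨s, ?_⟩
      fin_cases i <;> fin_cases j <;> simp at hi hj <;> subst hi <;> subst hj
      · exact absurd rfl hne
      · exact Or.inl h
      · exact Or.inr h
      · exact absurd rfl hne
  · rintro ⟨hne, s, h | h⟩
    · exact ⟨hne, 2, sym s, ![x, y], h, ⟨0, rfl⟩, ⟨1, rfl⟩⟩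
    · exact ⟨hne, 2, sym s, ![y, x], h, ⟨1, rfl⟩, ⟨0, rfl⟩⟩

/-! Back and forth -/

lemma term_rel {M N : Type} [LL.Structure M] [LL.Structure N] {α : Type} (p : Set (M × N))
    (v : α → M) (w : α → N) (h : ∀ i, (v i, w i) ∈ p) (t : LL.Term α) :
    (t.realize v, t.realize w) ∈ p := by
  cases t with
  | var i => exact h i
  | func f _ => exact isEmptyElim f

lemma ef {M N : Type} [LL.Structure M] [LL.Structure N] (I : ℕ → Set (Set (M × N)))
    (hinj : ∀ k, ∀ p ∈ I k, ∀ x ∈ p, ∀ y ∈ p, (x.1 = y.1 ↔ x.2 = y.2))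
    (hrel : ∀ k, ∀ p ∈ I k, ∀ x ∈ p, ∀ y ∈ p, ∀ s, (rl s x.1 y.1 ↔ rl s x.2 y.2))
    (hforth : ∀ k, ∀ p ∈ I (k+1), ∀ x, ∃ y, insert (x, y) p ∈ I k)
    (hback : ∀ k, ∀ p ∈ I (k+1), ∀ y, ∃ x, insert (x, y) p ∈ I k)
    {α : Type} {n : ℕ} (φ : LL.BoundedFormula α n) :
    ∀ (k : ℕ) (p : Set (M × N)), p ∈ I k → qr φ ≤ k →
      ∀ (v : α → M) (w : α → N) (xs : Fin n → M) (ys : Fin n → N),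
      (∀ i, (v i, w i) ∈ p) → (∀ i, (xs i, ys i) ∈ p) → (φ.Realize v xs ↔ φ.Realize w ys) := by
  have key : ∀ {n : ℕ} (p : Set (M × N)) (v : α → M) (w : α → N) (xs : Fin n → M)
      (ys : Fin n → N), (∀ i, (v i, w i) ∈ p) → (∀ i, (xs i, ys i) ∈ p) →
      ∀ t : LL.Term (α ⊕ Fin n), (t.realize (Sum.elim v xs), t.realize (Sum.elim w ys)) ∈ p := by
    intro n p v w xs ys h1 h2 t
    apply term_rel
    rintro (i | i)
    · exact h1 i
    · exact h2 i
  induction φ with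
  | falsum => intros; rfl
  | equal t1 t2 =>
    intro k p hp _ v w xs ys h1 h2
    exact hinj k p hp _ (key p v w xs ys h1 h2 t1) _ (key p v w xs ys h1 h2 t2)
  | rel R ts =>
    intro k p hp _ v w xs ys h1 h2
    cases R with
    | mk s =>
      have e1 := relMap_iff s (fun i => (ts i).realize (Sum.elim v xs))
      have e2 := relMap_iff s (fun i => (ts i).realize (Sum.elim w ys))
      have := hrel k p hp _ (key p v w xs ys h1 h2 (ts 0)) _ (key p v w xs ys h1 h2 (ts 1)) s
      exact e1.trans (this.trans e2.symm)
  | imp f g ihf ihg =>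
    intro k p hp hq v w xs ys h1 h2
    simp only [qr] at hq
    simp only [BoundedFormula.realize_imp]
    rw [ihf k p hp (by omega) v w xs ys h1 h2, ihg k p hp (by omega) v w xs ys h1 h2]
  | all f ih =>
    intro k p hp hq v w xs ys h1 h2
    simp only [qr] at hq
    obtain ⟨k, rfl⟩ : ∃ k', k = k' + 1 := ⟨k - 1, by omega⟩
    simp only [BoundedFormula.realize_all]
    have step : ∀ x y, insert (x, y) p ∈ I k →
        (f.Realize v (Fin.snoc xs x) ↔ f.Realize w (Fin.snoc ys y)) := by
      intro x y hxy
      refine ih k _ hxy (by omega) _ _ _ _ (fun i => Or.inr (h1 i)) ?_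
      intro i
      refine Fin.lastCases ?_ (fun i => ?_) i
      · simp
      · simpa using Or.inr (h2 i)
    constructor
    · intro h y
      obtain ⟨x, hx⟩ := hback k p hp y
      exact (step x y hx).1 (h x)
    · intro h x
      obtain ⟨y, hy⟩ := hforth k p hp x
      exact (step x y hy).2 (h y)

/-! The combinatorial core -/

section core
variable {M : Type} [LL.Structure M]

def Lk (s : Fin 6) (x y : M) : Prop :=
  ∃ z, rl s y z ∧ (∀ e, rl s x e → ∃ e', rl s y e' ∧ e' ≠ z ∧ rl 5 e e') ∧
    (∀ e', rl s y e' → e' ≠ z → ∃ e, rl s x e ∧ rl 5 e e') ∧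
    (∀ e e1 e2, rl s x e → rl s y e1 → rl s y e2 → e1 ≠ z → e2 ≠ z → rl 5 e e1 → rl 5 e e2 →
      e1 = e2) ∧
    (∀ e1 e2 e', rl s x e1 → rl s x e2 → rl s y e' → e' ≠ z → rl 5 e1 e' → rl 5 e2 e' →
      e1 = e2)

def U1 (M : Type) [LL.Structure M] : Prop :=
  ∀ x : M, rl 0 x x → (∃ e, rl 2 x e) → ∃ y, rl 0 y y ∧ rl 4 y x
def U2 (M : Type) [LL.Structure M] : Prop :=
  ∀ x : M, rl 0 x x → ¬ rl 1 x x → (∃ e, rl 3 x e) → ∃ y, rl 0 y y ∧ rl 4 x y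
def U3 (M : Type) [LL.Structure M] : Prop :=
  ∀ x y y' : M, rl 0 x x → rl 0 y y → rl 0 y' y' → rl 4 x y → rl 4 x y' → y = y'
def U4 (M : Type) [LL.Structure M] : Prop :=
  ∀ x y : M, rl 0 x x → rl 0 y y → (¬ ∃ e, rl 2 x e) → (¬ ∃ e, rl 2 y e) → x = y
def U5 (M : Type) [LL.Structure M] : Prop :=
  ∀ x y : M, rl 0 x x → rl 0 y y → rl 4 x y → Lk 2 x y
def U6 (M : Type) [LL.Structure M] : Prop :=
  ∀ x y : M, rl 0 x x → rl 0 y y → rl 4 x y → ¬ rl 1 x x → Lk 3 y x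

structure U (M : Type) [LL.Structure M] : Prop where
  u1 : U1 M
  u2 : U2 M
  u3 : U3 M
  u4 : U4 M
  u5 : U5 M
  u6 : U6 M

def Phi (M : Type) [LL.Structure M] : Prop :=
  U M → (∃ x : M, rl 0 x x) ∧ ¬ ∃ x : M, rl 0 x x ∧ rl 1 x x

noncomputable def cd (s : Fin 6) (x : M) : ℕ := {e | rl s x e}.ncard

lemma Lk.card [Finite M] {s : Fin 6} {x y : M} (h : Lk s x y) : cd s y = cd s x + 1 := by
  obtain ⟨z, hz, h1, h2, h3, h4⟩ := h
  have : cd s x = ({e | rl s y e} \ {z}).ncard := by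
    choose! f hf using h1
    refine Set.ncard_congr (fun e _ => f e) ?_ ?_ ?_
    · intro e he
      exact ⟨(hf e he).1, (hf e he).2.1⟩
    · intro e1 e2 he1 he2 h
      refine h4 e1 e2 (f e1) he1 he2 (hf e1 he1).1 (hf e1 he1).2.1 (hf e1 he1).2.2 ?_
      have h' : f e1 = f e2 := h
      rw [h']; exact (hf e2 he2).2.2
    · rintro e' ⟨he', hne⟩
      obtain ⟨e, he, hk⟩ := h2 e' he' hne
      exact ⟨e, he, h3 e _ _ he (hf e he).1 he' (hf e he).2.1 hne (hf e he).2.2 hk⟩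
  rw [this]
  unfold cd
  exact (Set.ncard_sdiff_singleton_add_one (s := {e | rl s y e}) hz).symm

lemma cd_pos [Finite M] {s : Fin 6} {x : M} : 0 < cd s x ↔ ∃ e, rl s x e := by
  unfold cd
  rw [Set.ncard_pos]
  rfl

lemma cd_zero [Finite M] {s : Fin 6} {x : M} : cd s x = 0 ↔ ¬ ∃ e, rl s x e := by
  rw [← cd_pos]; omega

end core

def Trans (A B : Type) [LL.Structure A] [LL.Structure B] : Prop :=
  ∀ a0 a1 : A, ∃ f : A → B,
    (∀ u v, (Nb a0 u ∨ Nb a1 u) → (Nb a0 v ∨ Nb a1 v) → f u = f v → u = v) ∧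
    (∀ s u v, (Nb a0 u ∨ Nb a1 u) → (Nb a0 v ∨ Nb a1 v) → (rl s (f u) (f v) ↔ rl s u v)) ∧
    (∀ y, (Nb (f a0) y ∨ Nb (f a1) y) → ∃ u, (Nb a0 u ∨ Nb a1 u) ∧ f u = y)

section pres
variable {A B : Type} [LL.Structure A] [LL.Structure B]

lemma nb_self (x : A) : Nb x x := Or.inl rfl
lemma nb_l {s : Fin 6} {x y : A} (h : rl s x y) : Nb x y := Or.inr ⟨s, Or.inl h⟩
lemma nb_r {s : Fin 6} {x y : A} (h : rl s y x) : Nb x y := Or.inr ⟨s, Or.inr h⟩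

lemma trans_one (hT : Trans A B) (a : A) : ∃ (b : B), (∀ s, rl s b b ↔ rl s a a) ∧
    (∀ s, cd s b = cd s a) := by
  obtain ⟨f, hi, hr, hs⟩ := hT a a
  refine ⟨f a, fun s => hr s a a (Or.inl (nb_self a)) (Or.inl (nb_self a)), fun s => ?_⟩
  symm
  refine Set.ncard_congr (fun e _ => f e) ?_ ?_ ?_
  · intro e he
    exact (hr s a e (Or.inl (nb_self a)) (Or.inl (nb_l he))).2 he
  · intro e1 e2 h1 h2 h
    exact hi e1 e2 (Or.inl (nb_l h1)) (Or.inl (nb_l h2)) h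
  · intro y hy
    obtain ⟨u, hu, rfl⟩ := hs y (Or.inl (nb_l hy))
    exact ⟨u, (hr s a u (Or.inl (nb_self a)) hu).1 hy, rfl⟩

lemma lk_trans {a0 a1 : A} {f : A → B} {x y : A} (s : Fin 6)
    (hx : ∀ u, Nb x u → (Nb a0 u ∨ Nb a1 u)) (hy : ∀ u, Nb y u → (Nb a0 u ∨ Nb a1 u))
    (hi : ∀ u v, (Nb a0 u ∨ Nb a1 u) → (Nb a0 v ∨ Nb a1 v) → f u = f v → u = v)
    (hr : ∀ s u v, (Nb a0 u ∨ Nb a1 u) → (Nb a0 v ∨ Nb a1 v) → (rl s (f u) (f v) ↔ rl s u v))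
    (hs : ∀ w, (Nb (f x) w ∨ Nb (f y) w) → ∃ u, (Nb a0 u ∨ Nb a1 u) ∧ f u = w)
    (h : Lk s (f x) (f y)) : Lk s x y := by
  obtain ⟨z, hz, h1, h2, h3, h4⟩ := h
  have hxx := hx x (nb_self x)
  have hyy := hy y (nb_self y)
  obtain ⟨z, hzS, rfl⟩ := hs z (Or.inr (nb_l hz))
  have tx : ∀ e, rl s x e → rl s (f x) (f e) := fun e he =>
    (hr s x e hxx (hx e (nb_l he))).2 he
  have ty : ∀ e, rl s y e → rl s (f y) (f e) := fun e he =>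
    (hr s y e hyy (hy e (nb_l he))).2 he
  refine ⟨z, (hr s y z hyy hzS).1 hz, ?_, ?_, ?_, ?_⟩
  · intro e he
    obtain ⟨e', he', hne, hk⟩ := h1 (f e) (tx e he)
    obtain ⟨e', hS, rfl⟩ := hs e' (Or.inr (nb_l he'))
    exact ⟨e', (hr s y e' hyy hS).1 he', fun h => hne (by rw [h]),
      (hr 5 e e' (hx e (nb_l he)) hS).1 hk⟩
  · intro e' he' hne
    obtain ⟨e, he, hk⟩ := h2 (f e') (ty e' he') (fun h => hne (hi _ _ (hy e' (nb_l he')) hzS h))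
    obtain ⟨e, hS, rfl⟩ := hs e (Or.inl (nb_l he))
    exact ⟨e, (hr s x e hxx hS).1 he, (hr 5 e e' hS (hy e' (nb_l he'))).1 hk⟩
  · intro e e1 e2 he he1 he2 hn1 hn2 hk1 hk2
    have S0 := hx e (nb_l he)
    have S1 := hy e1 (nb_l he1)
    have S2 := hy e2 (nb_l he2)
    exact hi _ _ S1 S2 (h3 (f e) (f e1) (f e2) (tx e he) (ty e1 he1) (ty e2 he2)
      (fun h => hn1 (hi _ _ S1 hzS h)) (fun h => hn2 (hi _ _ S2 hzS h))
      ((hr 5 e e1 S0 S1).2 hk1) ((hr 5 e e2 S0 S2).2 hk2))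
  · intro e1 e2 e' he1 he2 he' hn hk1 hk2
    have S0 := hy e' (nb_l he')
    have S1 := hx e1 (nb_l he1)
    have S2 := hx e2 (nb_l he2)
    exact hi _ _ S1 S2 (h4 (f e1) (f e2) (f e') (tx e1 he1) (tx e2 he2) (ty e' he')
      (fun h => hn (hi _ _ S0 hzS h))
      ((hr 5 e1 e' S1 S0).2 hk1) ((hr 5 e2 e' S2 S0).2 hk2))

lemma U_trans (hT : Trans A B) (hU : U B) : U A := by
  refine ⟨?_, ?_, ?_, ?_, ?_, ?_⟩
  · intro x hx ⟨e, he⟩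
    obtain ⟨f, hi, hr, hs⟩ := hT x x
    have Sx : Nb x x ∨ Nb x x := Or.inl (nb_self x)
    obtain ⟨y, hy, hyx⟩ := hU.u1 (f x) ((hr _ _ _ Sx Sx).2 hx)
      ⟨f e, (hr _ _ _ Sx (Or.inl (nb_l he))).2 he⟩
    obtain ⟨u, hu, rfl⟩ := hs y (Or.inl (nb_r hyx))
    exact ⟨u, (hr _ _ _ hu hu).1 hy, (hr _ _ _ hu Sx).1 hyx⟩
  · intro x hx hb ⟨e, he⟩
    obtain ⟨f, hi, hr, hs⟩ := hT x x
    have Sx : Nb x x ∨ Nb x x := Or.inl (nb_self x)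
    obtain ⟨y, hy, hyx⟩ := hU.u2 (f x) ((hr _ _ _ Sx Sx).2 hx)
      (fun h => hb ((hr _ _ _ Sx Sx).1 h))
      ⟨f e, (hr _ _ _ Sx (Or.inl (nb_l he))).2 he⟩
    obtain ⟨u, hu, rfl⟩ := hs y (Or.inl (nb_l hyx))
    exact ⟨u, (hr _ _ _ hu hu).1 hy, (hr _ _ _ Sx hu).1 hyx⟩
  · intro x y y' hx hy hy' h h'
    obtain ⟨f, hi, hr, hs⟩ := hT x x
    have Sx : Nb x x ∨ Nb x x := Or.inl (nb_self x)
    have Sy : Nb x y ∨ Nb x y := Or.inl (nb_l h)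
    have Sy' : Nb x y' ∨ Nb x y' := Or.inl (nb_l h')
    exact hi _ _ Sy Sy' (hU.u3 (f x) (f y) (f y') ((hr _ _ _ Sx Sx).2 hx) ((hr _ _ _ Sy Sy).2 hy)
      ((hr _ _ _ Sy' Sy').2 hy') ((hr _ _ _ Sx Sy).2 h) ((hr _ _ _ Sx Sy').2 h'))
  · intro x y hx hy h h'
    obtain ⟨f, hi, hr, hs⟩ := hT x y
    have Sx : Nb x x ∨ Nb y x := Or.inl (nb_self x)
    have Sy : Nb x y ∨ Nb y y := Or.inr (nb_self y)
    refine hi _ _ Sx Sy (hU.u4 _ _ ((hr _ _ _ Sx Sx).2 hx) ((hr _ _ _ Sy Sy).2 hy) ?_ ?_)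
    · rintro ⟨e, he⟩
      obtain ⟨u, hu, rfl⟩ := hs e (Or.inl (nb_l he))
      exact h ⟨u, (hr _ _ _ Sx hu).1 he⟩
    · rintro ⟨e, he⟩
      obtain ⟨u, hu, rfl⟩ := hs e (Or.inr (nb_l he))
      exact h' ⟨u, (hr _ _ _ Sy hu).1 he⟩
  · intro x y hx hy h
    obtain ⟨f, hi, hr, hs⟩ := hT x y
    have Sx : Nb x x ∨ Nb y x := Or.inl (nb_self x)
    have Sy : Nb x y ∨ Nb y y := Or.inr (nb_self y)
    exact lk_trans (f := f) 2 (fun u hu => Or.inl hu) (fun u hu => Or.inr hu) hi hr hs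
      (hU.u5 _ _ ((hr _ _ _ Sx Sx).2 hx) ((hr _ _ _ Sy Sy).2 hy) ((hr _ _ _ Sx Sy).2 h))
  · intro x y hx hy h hb
    obtain ⟨f, hi, hr, hs⟩ := hT x y
    have Sx : Nb x x ∨ Nb y x := Or.inl (nb_self x)
    have Sy : Nb x y ∨ Nb y y := Or.inr (nb_self y)
    exact lk_trans (f := f) 3 (fun u hu => Or.inr hu) (fun u hu => Or.inl hu) hi hr
      (fun w hw => hs w hw.symm)
      (hU.u6 _ _ ((hr _ _ _ Sx Sx).2 hx) ((hr _ _ _ Sy Sy).2 hy) ((hr _ _ _ Sx Sy).2 h)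
        (fun h => hb ((hr _ _ _ Sx Sx).1 h)))

lemma hub_unique [Finite B] (hU : U B) : ∀ (n : ℕ) (x y : B), rl 0 x x → rl 0 y y →
    cd 2 x = n → cd 2 y = n → x = y := by
  intro n
  induction n with
  | zero =>
    intro x y hx hy h h'
    exact hU.u4 x y hx hy (cd_zero.1 h) (cd_zero.1 h')
  | succ n ih =>
    intro x y hx hy h h'
    obtain ⟨x', hx', hxx⟩ := hU.u1 x hx (cd_pos.1 (by omega))
    obtain ⟨y', hy', hyy⟩ := hU.u1 y hy (cd_pos.1 (by omega))
    have e1 := (hU.u5 x' x hx' hx hxx).card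
    have e2 := (hU.u5 y' y hy' hy hyy).card
    have := ih x' y' hx' hy' (by omega) (by omega)
    subst this
    exact hU.u3 x' x y hx' hx hy hxx hyy

lemma start_of [Finite B] (hU : U B) : ∀ (n : ℕ) (c : B), rl 0 c c → cd 2 c = n →
    (∀ b : B, rl 0 b b → rl 1 b b → n ≤ cd 2 b) →
    ∃ s : B, rl 0 s s ∧ cd 2 s = 0 ∧ cd 3 s = cd 3 c + n := by
  intro n
  induction n with
  | zero => intro c hc h _; exact ⟨c, hc, h, rfl⟩
  | succ n ih =>
    intro c hc h hb
    obtain ⟨y, hy, hyc⟩ := hU.u1 c hc (cd_pos.1 (by omega))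
    have e1 := (hU.u5 y c hy hc hyc).card
    have hyb : ¬ rl 1 y y := fun hh => by
      have := hb y hy hh; omega
    have e2 := (hU.u6 y c hy hc hyc hyb).card
    obtain ⟨s, hs, h1, h2⟩ := ih y hy (by omega) (fun b h h' => by have := hb b h h'; omega)
    exact ⟨s, hs, h1, by omega⟩

theorem preserved [Finite A] [Finite B] (hT : Trans A B) (hA : Phi A) : Phi B := by
  intro hUB
  have hUA := U_trans hT hUB
  obtain ⟨⟨h, hh⟩, hnb⟩ := hA hUA
  refine ⟨?_, ?_⟩
  · obtain ⟨b, hb, _⟩ := trans_one hT h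
    exact ⟨b, (hb 0).2 hh⟩
  intro hex
  classical
  obtain ⟨b, ⟨hb0, hb1⟩, hmin⟩ : ∃ b : B, (rl 0 b b ∧ rl 1 b b) ∧
      ∀ c : B, rl 0 c c → rl 1 c c → cd 2 b ≤ cd 2 c := by
    have hex' : ∃ n, ∃ b : B, (rl 0 b b ∧ rl 1 b b) ∧ cd 2 b = n := by
      obtain ⟨b, hb⟩ := hex; exact ⟨_, b, hb, rfl⟩
    obtain ⟨b, hb, hn⟩ := Nat.find_spec hex'
    refine ⟨b, hb, fun c h0 h1 => ?_⟩
    rw [hn]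
    exact Nat.find_min' hex' ⟨c, ⟨h0, h1⟩, rfl⟩
  obtain ⟨sB, hsB, hs0, hs1⟩ := start_of hUB _ b hb0 rfl hmin
  obtain ⟨sA, hsA, ha0, -⟩ := start_of hUA _ h hh rfl (fun c h0 h1 => absurd ⟨c, h0, h1⟩ hnb)
  obtain ⟨sA', ht0, htc⟩ := trans_one hT sA
  have : sA' = sB := hub_unique hUB 0 _ _ ((ht0 0).2 hsA) hsB (by rw [htc, ha0]) hs0
  subst this
  have hn : cd 3 sA = cd 3 b + cd 2 b := by rw [← htc, hs1]
  have climb : ∀ j, j ≤ cd 3 sA → ∃ c : A, rl 0 c c ∧ cd 2 c = j ∧ cd 3 c + j = cd 3 sA := by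
    intro j
    induction j with
    | zero => intro _; exact ⟨sA, hsA, ha0, rfl⟩
    | succ j ih =>
      intro hj
      obtain ⟨c, hc, h1, h2⟩ := ih (by omega)
      have hcb : ¬ rl 1 c c := fun hh => hnb ⟨c, hc, hh⟩
      obtain ⟨y, hy, hcy⟩ := hUA.u2 c hc hcb (cd_pos.1 (by omega))
      have e1 := (hUA.u5 c y hc hy hcy).card
      have e2 := (hUA.u6 c y hc hy hcy hcb).card
      exact ⟨y, hy, by omega, by omega⟩
  obtain ⟨c, hc, hc2, -⟩ := climb (cd 2 b) (by omega)
  obtain ⟨c', hc0, hcc⟩ := trans_one hT c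
  have : c' = b := hub_unique hUB _ _ _ ((hc0 0).2 hc) hb0 ((hcc 2).trans hc2) rfl
  subst this
  exact hnb ⟨c, hc, (hc0 1).1 hb1⟩

end pres

section sentence

def at2 {n : ℕ} (s : Fin 6) (i j : Fin n) : LL.BoundedFormula Empty n :=
  (sym s).boundedFormula₂ (Term.var (Sum.inr i)) (Term.var (Sum.inr j))

def eq2 {n : ℕ} (i j : Fin n) : LL.BoundedFormula Empty n :=
  (Term.var (Sum.inr i) : LL.Term (Empty ⊕ Fin n)).bdEqual (Term.var (Sum.inr j))

lemma realize_at2 {M : Type} [LL.Structure M] {n : ℕ} (s : Fin 6) (i j : Fin n)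
    (v : Empty → M) (xs : Fin n → M) : (at2 s i j).Realize v xs ↔ rl s (xs i) (xs j) := by
  unfold at2 rl
  rw [BoundedFormula.realize_rel₂]
  rfl

lemma realize_eq2 {M : Type} [LL.Structure M] {n : ℕ} (i j : Fin n)
    (v : Empty → M) (xs : Fin n → M) : (eq2 i j).Realize v xs ↔ xs i = xs j := by
  unfold eq2
  rw [BoundedFormula.realize_bdEqual]
  rfl

def lkF (s : Fin 6) (i j : Fin 6) : LL.BoundedFormula Empty 2 :=
  ∃' (at2 s (Fin.ofNat 3 j) 2 ⊓
   ((∀' (at2 s (Fin.ofNat 4 i) 3 ⟹ ∃' (at2 s (Fin.ofNat 5 j) 4 ⊓ (∼(eq2 4 2) ⊓ at2 5 3 4)))) ⊓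
   ((∀' (at2 s (Fin.ofNat 4 j) 3 ⟹ (∼(eq2 3 2) ⟹ ∃' (at2 s (Fin.ofNat 5 i) 4 ⊓ at2 5 4 3)))) ⊓
   ((∀' ∀' ∀' (at2 s (Fin.ofNat 6 i) 3 ⟹ (at2 s (Fin.ofNat 6 j) 4 ⟹ (at2 s (Fin.ofNat 6 j) 5 ⟹
      (∼(eq2 4 2) ⟹ (∼(eq2 5 2) ⟹ (at2 5 3 4 ⟹ (at2 5 3 5 ⟹ eq2 4 5)))))))) ⊓
   (∀' ∀' ∀' (at2 s (Fin.ofNat 6 i) 3 ⟹ (at2 s (Fin.ofNat 6 i) 4 ⟹ (at2 s (Fin.ofNat 6 j) 5 ⟹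
      (∼(eq2 5 2) ⟹ (at2 5 3 5 ⟹ (at2 5 4 5 ⟹ eq2 3 4)))))))))))

lemma snoc_val {M : Type} {n : ℕ} (xs : Fin n → M) (a : M) (i : Fin (n+1)) :
    (Fin.snoc xs a : Fin (n+1) → M) i = if h : i.val < n then xs ⟨i.val, h⟩ else a := by
  simp [Fin.snoc]
  rfl

lemma realize_lkF01 {M : Type} [LL.Structure M] (s : Fin 6)
    (v : Empty → M) (xs : Fin 2 → M) : (lkF s 0 1).Realize v xs ↔ Lk s (xs 0) (xs 1) := by
  unfold lkF Lk
  simp [realize_at2, realize_eq2, snoc_val, Fin.ofNat]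

lemma realize_lkF10 {M : Type} [LL.Structure M] (s : Fin 6)
    (v : Empty → M) (xs : Fin 2 → M) : (lkF s 1 0).Realize v xs ↔ Lk s (xs 1) (xs 0) := by
  unfold lkF Lk
  simp [realize_at2, realize_eq2, snoc_val, Fin.ofNat]

def uF : LL.Sentence :=
  (∀' (at2 0 0 0 ⟹ ((∃' (at2 2 0 1)) ⟹ ∃' (at2 0 1 1 ⊓ at2 4 1 0)))) ⊓
  ((∀' (at2 0 0 0 ⟹ (∼(at2 1 0 0) ⟹ ((∃' (at2 3 0 1)) ⟹ ∃' (at2 0 1 1 ⊓ at2 4 0 1))))) ⊓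
  ((∀' ∀' ∀' (at2 0 0 0 ⟹ (at2 0 1 1 ⟹ (at2 0 2 2 ⟹ (at2 4 0 1 ⟹ (at2 4 0 2 ⟹ eq2 1 2)))))) ⊓
  ((∀' ∀' (at2 0 0 0 ⟹ (at2 0 1 1 ⟹ (∼(∃' (at2 2 0 2)) ⟹ (∼(∃' (at2 2 1 2)) ⟹ eq2 0 1))))) ⊓
  ((∀' ∀' (at2 0 0 0 ⟹ (at2 0 1 1 ⟹ (at2 4 0 1 ⟹ lkF 2 0 1)))) ⊓
  (∀' ∀' (at2 0 0 0 ⟹ (at2 0 1 1 ⟹ (at2 4 0 1 ⟹ (∼(at2 1 0 0) ⟹ lkF 3 1 0)))))))))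

def phiF : LL.Sentence :=
  uF ⟹ ((∃' (at2 0 0 0)) ⊓ ∼(∃' (at2 0 0 0 ⊓ at2 1 0 0)))

lemma realize_uF (M : Type) [LL.Structure M] : M ⊨ uF ↔ U M := by
  have : M ⊨ uF ↔ (U1 M ∧ U2 M ∧ U3 M ∧ U4 M ∧ U5 M ∧ U6 M) := by
    unfold uF Sentence.Realize Formula.Realize
    simp only [BoundedFormula.realize_inf]
    refine and_congr ?_ (and_congr ?_ (and_congr ?_ (and_congr ?_ (and_congr ?_ ?_))))
    · simp [U1, realize_at2, realize_eq2, snoc_val]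
    · simp [U2, realize_at2, realize_eq2, snoc_val]
    · simp [U3, realize_at2, realize_eq2, snoc_val]
    · simp [U4, realize_at2, realize_eq2, snoc_val]
    · simp [U5, realize_at2, realize_lkF01, snoc_val]
    · simp [U6, realize_at2, realize_lkF10, snoc_val]
  rw [this]
  exact ⟨fun ⟨a, b, c, d, e, f⟩ => ⟨a, b, c, d, e, f⟩, fun ⟨a, b, c, d, e, f⟩ => ⟨a, b, c, d, e, f⟩⟩

lemma realize_phiF (M : Type) [LL.Structure M] : M ⊨ phiF ↔ Phi M := by
  unfold Phi
  rw [← realize_uF]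
  unfold phiF Sentence.Realize Formula.Realize
  rw [BoundedFormula.realize_imp]
  simp [realize_at2, snoc_val]

end sentence

section diagram

variable {A : Type} [LL.Structure A]

def Sb (a0 a1 : A) : Type := {u : A // Nb a0 u ∨ Nb a1 u}

instance [Finite A] (a0 a1 : A) : Finite (Sb a0 a1) := by unfold Sb; infer_instance

def s0 (a0 a1 : A) : Sb a0 a1 := ⟨a0, Or.inl (nb_self a0)⟩
def s1 (a0 a1 : A) : Sb a0 a1 := ⟨a1, Or.inr (nb_self a1)⟩

/-- semantic diagram -/
def Dg (a0 a1 : A) (M : Type) [LL.Structure M] (x0 x1 : M) (z : Sb a0 a1 → M) : Prop :=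
  x0 = z (s0 a0 a1) ∧ x1 = z (s1 a0 a1) ∧ (∀ u v, z u = z v → u = v) ∧
  (∀ s u v, rl s (z u) (z v) ↔ rl s u.1 v.1) ∧
  (∀ y, (Nb x0 y ∨ Nb x1 y) → ∃ u, y = z u)

def atv {α : Type} (s : Fin 6) (i j : α) : LL.Formula α :=
  (sym s).formula₂ (Term.var i) (Term.var j)
def eqv {α : Type} (i j : α) : LL.Formula α :=
  (Term.var i : LL.Term α).equal (Term.var j)

lemma realize_atv {M α : Type} [LL.Structure M] (s : Fin 6) (i j : α) (v : α → M) :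
    (atv s i j).Realize v ↔ rl s (v i) (v j) := by
  unfold atv rl
  rw [Formula.realize_rel₂]
  rfl
lemma realize_eqv {M α : Type} [LL.Structure M] (i j : α) (v : α → M) :
    (eqv i j).Realize v ↔ v i = v j := by
  unfold eqv
  rw [Formula.realize_equal]
  rfl

noncomputable def nbv {α : Type} (i j : α) : LL.Formula α :=
  eqv i j ⊔ Formula.iSup (fun s : Fin 6 => atv s i j ⊔ atv s j i)

lemma realize_nbv {M α : Type} [LL.Structure M] (i j : α) (v : α → M) :
    (nbv i j).Realize v ↔ Nb (v i) (v j) := by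
  unfold nbv Nb
  simp only [Formula.realize_sup, Formula.realize_iSup, realize_atv, realize_eqv]

open Classical in
noncomputable def dgF [Finite A] (a0 a1 : A) {k : ℕ} (i j : Fin k) : LL.Formula (Fin k) :=
  Formula.iExs (Sb a0 a1)
    (eqv (Sum.inl i) (Sum.inr (s0 a0 a1)) ⊓ (eqv (Sum.inl j) (Sum.inr (s1 a0 a1)) ⊓
    (Formula.iInf (fun p : Sb a0 a1 × Sb a0 a1 =>
        if p.1 = p.2 then ⊤ else ∼(eqv (Sum.inr p.1) (Sum.inr p.2))) ⊓
    (Formula.iInf (fun p : Fin 6 × Sb a0 a1 × Sb a0 a1 =>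
        if rl p.1 p.2.1.1 p.2.2.1 then atv p.1 (Sum.inr p.2.1) (Sum.inr p.2.2)
        else ∼(atv p.1 (Sum.inr p.2.1) (Sum.inr p.2.2))) ⊓
     Formula.iAlls Unit ((nbv (Sum.inl (Sum.inl i)) (Sum.inr ()) ⊔
        nbv (Sum.inl (Sum.inl j)) (Sum.inr ())) ⟹
          Formula.iSup (fun u : Sb a0 a1 => eqv (Sum.inr ()) (Sum.inl (Sum.inr u))))))))

lemma realize_dgF [Finite A] (a0 a1 : A) {k : ℕ} (i j : Fin k) (M : Type) [LL.Structure M]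
    (x : Fin k → M) : (dgF a0 a1 i j).Realize x ↔ ∃ z, Dg a0 a1 M (x i) (x j) z := by
  unfold dgF Dg
  rw [Formula.realize_iExs]
  refine exists_congr fun z => ?_
  simp only [Formula.realize_inf, realize_eqv, Formula.realize_iInf, Formula.realize_iAlls,
    Formula.realize_imp, Formula.realize_sup, realize_nbv, Formula.realize_iSup, Sum.elim_inl,
    Sum.elim_inr]
  refine and_congr Iff.rfl (and_congr Iff.rfl (and_congr ?_ (and_congr ?_ ?_)))
  · constructor
    · intro h u v huv
      by_contra hne
      have := h (u, v)
      simp [hne, realize_eqv] at this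
      exact this huv
    · rintro h ⟨u, v⟩
      by_cases hne : u = v
      · simp [hne]
      · simp [hne, realize_eqv]
        exact fun hh => hne (h _ _ hh)
  · constructor
    · intro h s u v
      have := h (s, u, v)
      by_cases hr : rl s u.1 v.1
      · simpa [hr, realize_atv] using this
      · simpa [hr, realize_atv] using this
    · rintro h ⟨s, u, v⟩
      have := h s u v
      by_cases hr : rl s u.1 v.1
      · simpa [hr, realize_atv] using this
      · simpa [hr, realize_atv] using this
  · exact ⟨fun h y => h (fun _ => y), fun h y => h (y ())⟩

lemma rl_induced {M : Type} [LL.Structure M] (S : Set M) (s : Fin 6) (x y : S) :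
    @rl S (inducedStructure LL S) s x y ↔ rl s x.1 y.1 := by
  letI := inducedStructure LL S
  exact relMap_iff s (fun i => ((![x, y] : Fin 2 → S) i : M))

lemma nb_induced {M : Type} [LL.Structure M] (S : Set M) (x y : S) :
    @Nb S (inducedStructure LL S) x y ↔ Nb x.1 y.1 := by
  unfold Nb
  simp only [rl_induced, Subtype.ext_iff]

lemma close_one {M : Type} [LL.Structure M] {x y : M} (h : Nb x y) :
    ∀ r, 1 ≤ r → CloseLE LL M r x y := by
  intro r hr
  induction r with
  | zero => omega
  | succ r ih =>
    rcases Nat.eq_zero_or_pos r with rfl | h0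
    · by_cases hxy : x = y
      · exact Or.inl hxy
      · refine Or.inr ⟨x, rfl, ?_⟩
        rw [adj_iff]
        exact ⟨hxy, h.resolve_left hxy⟩
    · exact Or.inl (ih h0)

lemma nb_of_dg {a0 a1 : A} {M : Type} [LL.Structure M] {x0 x1 : M} {z : Sb a0 a1 → M}
    (h : Dg a0 a1 M x0 x1 z) (u : Sb a0 a1) : Nb x0 (z u) ∨ Nb x1 (z u) := by
  obtain ⟨h0, h1, hi, hr, hs⟩ := h
  have key : ∀ w : Sb a0 a1, Nb w.1 u.1 → Nb (z w) (z u) := by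
    rintro w (hw | ⟨s, hw | hw⟩)
    · exact Or.inl (congrArg z (Subtype.ext hw))
    · exact nb_l ((hr s w u).2 hw)
    · exact nb_r ((hr s u w).2 hw)
  rw [h0, h1]
  rcases u.2 with hu | hu
  · exact Or.inl (key (s0 a0 a1) hu)
  · exact Or.inr (key (s1 a0 a1) hu)

lemma dgF_local [Finite A] (a0 a1 : A) {k : ℕ} (i j : Fin k) (r : ℕ) (hr : 1 ≤ r) :
    IsLocal r (dgF a0 a1 i j) := by
  intro M _ x
  have hball : ∀ (l : Fin k) (y : M), Nb (x l) y → y ∈ Ball LL x r :=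
    fun l y h => ⟨l, close_one h r hr⟩
  rw [realize_dgF, @realize_dgF A _ _ a0 a1 k i j (Ball LL x r) (inducedStructure LL _)]
  constructor
  · rintro ⟨z, hz⟩
    have hzB : ∀ u, z u ∈ Ball LL x r := fun u =>
      (nb_of_dg hz u).elim (hball i _) (hball j _)
    obtain ⟨h0, h1, hi, hrl, hs⟩ := hz
    refine ⟨fun u => ⟨z u, hzB u⟩, Subtype.ext h0, Subtype.ext h1, ?_, ?_, ?_⟩
    · intro u v h
      exact hi u v (congrArg Subtype.val h)
    · intro s u v
      rw [rl_induced]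
      exact hrl s u v
    · intro y hy
      rw [nb_induced, nb_induced] at hy
      obtain ⟨u, hu⟩ := hs y.1 hy
      exact ⟨u, Subtype.ext hu⟩
  · rintro ⟨z, h0, h1, hi, hrl, hs⟩
    refine ⟨fun u => (z u).1, congrArg Subtype.val h0, congrArg Subtype.val h1, ?_, ?_, ?_⟩
    · intro u v h
      exact hi u v (Subtype.ext h)
    · intro s u v
      have := hrl s u v
      rwa [rl_induced] at this
    · intro y hy
      have hyB : y ∈ Ball LL x r := hy.elim (hball i _) (hball j _)
      obtain ⟨u, hu⟩ := hs ⟨y, hyB⟩ (by rw [nb_induced, nb_induced]; exact hy)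
      exact ⟨u, congrArg Subtype.val hu⟩

lemma trans_of_locLE {B : Type} [LL.Structure B] [Finite A] {r k : ℕ} (hr : 1 ≤ r) (hk : 2 ≤ k)
    (h : ∀ q : ℕ, LocLE LL r q k A B) : Trans A B := by
  intro a0 a1
  classical
  let i : Fin k := ⟨0, by omega⟩
  let j : Fin k := ⟨1, by omega⟩
  have hij : j ≠ i := by simp [i, j]
  have := h _ (dgF a0 a1 i j) (dgF_local a0 a1 i j r hr) le_rfl
    ⟨fun l => if l = i then a0 else a1, by
      rw [realize_dgF, if_pos rfl, if_neg hij]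
      refine ⟨fun u => u.1, rfl, rfl, fun u v h => Subtype.ext h, fun _ _ _ => Iff.rfl, ?_⟩
      intro y hy
      exact ⟨⟨y, hy⟩, rfl⟩⟩
  obtain ⟨b, hb⟩ := this
  rw [realize_dgF] at hb
  obtain ⟨z, h0, h1, hi, hrl, hs⟩ := hb
  refine ⟨fun u => if hu : Nb a0 u ∨ Nb a1 u then z ⟨u, hu⟩ else b i, ?_, ?_, ?_⟩
  · intro u v hu hv huv
    simp only [hu, hv, dif_pos] at huv
    exact congrArg Subtype.val (hi _ _ huv)
  · intro s u v hu hv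
    simp only [hu, hv, dif_pos]
    exact hrl s _ _
  · intro y hy
    have e0 : Nb a0 a0 ∨ Nb a1 a0 := Or.inl (nb_self a0)
    have e1 : Nb a0 a1 ∨ Nb a1 a1 := Or.inr (nb_self a1)
    simp only [e0, e1, dif_pos] at hy
    obtain ⟨u, hu⟩ := hs y (by rw [h0, h1]; exact hy)
    refine ⟨u.1, u.2, ?_⟩
    simp only [u.2, dif_pos]
    exact hu.symm

end diagram

lemma local_emb {M N : Type} [LL.Structure M] [LL.Structure N] (f : M → N)
    (hf : ∀ x y, f x = f y → x = y) (hr : ∀ s x y, rl s (f x) (f y) ↔ rl s x y)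
    {k r : ℕ} (a : Fin k → M)
    (hc : ∀ i s, s < r → ∀ x, CloseLE LL M s (a i) x → ∀ y, Adj LL N (f x) y → ∃ y', f y' = y)
    (τ : LL.Formula (Fin k)) (hτ : IsLocal r τ) :
    τ.Realize a ↔ τ.Realize (f ∘ a) := by
  have hadj : ∀ x y, Adj LL N (f x) (f y) ↔ Adj LL M x y := by
    intro x y
    rw [adj_iff, adj_iff]
    simp only [hr]
    exact and_congr_left fun _ => ⟨fun h h' => h (by rw [h']), fun h h' => h (hf _ _ h')⟩
  have hclose : ∀ i s, s ≤ r → ∀ y, CloseLE LL N s (f (a i)) y ↔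
      ∃ x, f x = y ∧ CloseLE LL M s (a i) x := by
    intro i s
    induction s with
    | zero =>
      intro _ y
      constructor
      · intro h; exact ⟨a i, h, rfl⟩
      · rintro ⟨x, rfl, h⟩; exact congrArg f h
    | succ s ih =>
      intro hs y
      constructor
      · rintro (h | ⟨c, h, hcy⟩)
        · obtain ⟨x, hx, hx'⟩ := (ih (by omega) y).1 h
          exact ⟨x, hx, Or.inl hx'⟩
        · obtain ⟨x, rfl, hx'⟩ := (ih (by omega) c).1 h
          obtain ⟨y, rfl⟩ := hc i s (by omega) x hx' y hcy
          exact ⟨y, rfl, Or.inr ⟨x, hx', (hadj _ _).1 hcy⟩⟩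
      · rintro ⟨x, rfl, h | ⟨c, h, hcy⟩⟩
        · exact Or.inl ((ih (by omega) _).2 ⟨x, rfl, h⟩)
        · exact Or.inr ⟨f c, (ih (by omega) _).2 ⟨c, rfl, h⟩, (hadj _ _).2 hcy⟩
  rw [hτ M a, hτ N (f ∘ a)]
  letI := inducedStructure LL (Ball LL a r)
  letI := inducedStructure LL (Ball LL (f ∘ a) r)
  refine ef (M := Ball LL a r) (N := Ball LL (f ∘ a) r)
    (fun _ => {p | ∀ x ∈ p, f x.1.1 = x.2.1}) ?_ ?_ ?_ ?_ τ (qr τ)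
    {x | f x.1.1 = x.2.1} (fun x hx => hx) le_rfl _ _ _ _ (fun i => rfl) (fun i => i.elim0)
  · intro k p hp x hx y hy
    rw [Subtype.ext_iff, Subtype.ext_iff, ← hp x hx, ← hp y hy]
    exact ⟨fun h => by rw [h], fun h => hf _ _ h⟩
  · intro k p hp x hx y hy s
    rw [rl_induced, rl_induced, ← hp x hx, ← hp y hy, hr]
  · rintro k p hp ⟨x, i, hx⟩
    refine ⟨⟨f x, i, (hclose i r le_rfl _).2 ⟨x, rfl, hx⟩⟩, ?_⟩
    rintro z (rfl | hz)
    · rfl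
    · exact hp z hz
  · rintro k p hp ⟨y, i, hy⟩
    obtain ⟨x, rfl, hx⟩ := (hclose i r le_rfl _).1 hy
    refine ⟨⟨x, i, hx⟩, ?_⟩
    rintro z (rfl | hz)
    · rfl
    · exact hp z hz

/-! Models -/

def RN (β : ℕ → Prop) (s : Fin 6) (c s1 d t1 : ℕ) : Prop :=
  match s with
  | 0 => c = d ∧ s1 = 0 ∧ t1 = 0
  | 1 => c = d ∧ s1 = 0 ∧ t1 = 0 ∧ β c
  | 2 => s1 = 0 ∧ d = c ∧ 1 ≤ t1 ∧ t1 ≤ c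
  | 3 => s1 = 0 ∧ d = c ∧ c < t1
  | 4 => s1 = 0 ∧ t1 = 0 ∧ d = c + 1
  | 5 => t1 = s1 ∧ 1 ≤ s1 ∧ (d = c + 1 ∨ c = d + 1)

@[ext] structure Md (D : ℕ → ℕ → Prop) (β : ℕ → Prop) : Type where
  c : ℕ
  s : ℕ
  ok : D c s

def mdRel {D : ℕ → ℕ → Prop} {β : ℕ → Prop} : ∀ {n : ℕ}, Rels n → (Fin n → Md D β) → Prop
  | _, Rels.mk s, t => RN β s (t 0).c (t 0).s (t 1).c (t 1).s

instance instMd (D : ℕ → ℕ → Prop) (β : ℕ → Prop) : LL.Structure (Md D β) where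
  funMap f _ := isEmptyElim f
  RelMap R t := mdRel R t

section md
variable {D : ℕ → ℕ → Prop} {β : ℕ → Prop}

lemma rl_md (s : Fin 6) (x y : Md D β) :
    rl s x y ↔ RN β s x.c x.s y.c y.s := Iff.rfl
lemma rl0 (x y : Md D β) : rl 0 x y ↔ (x.c = y.c ∧ x.s = 0 ∧ y.s = 0) := Iff.rfl
lemma rl1 (x y : Md D β) : rl 1 x y ↔ (x.c = y.c ∧ x.s = 0 ∧ y.s = 0 ∧ β x.c) := Iff.rfl
lemma rl2 (x y : Md D β) : rl 2 x y ↔ (x.s = 0 ∧ y.c = x.c ∧ 1 ≤ y.s ∧ y.s ≤ x.c) := Iff.rfl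
lemma rl3 (x y : Md D β) : rl 3 x y ↔ (x.s = 0 ∧ y.c = x.c ∧ x.c < y.s) := Iff.rfl
lemma rl4 (x y : Md D β) : rl 4 x y ↔ (x.s = 0 ∧ y.s = 0 ∧ y.c = x.c + 1) := Iff.rfl
lemma rl5 (x y : Md D β) :
    rl 5 x y ↔ (y.s = x.s ∧ 1 ≤ x.s ∧ (y.c = x.c + 1 ∨ x.c = y.c + 1)) := Iff.rfl

lemma adj_col (x y : Md D β) (h : Adj LL (Md D β) x y) :
    x.c ≤ y.c + 1 ∧ y.c ≤ x.c + 1 := by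
  rw [adj_iff] at h
  obtain ⟨-, s, h⟩ := h
  simp only [rl_md] at h
  fin_cases s <;> simp only [RN] at h <;> omega

lemma close_col (s : ℕ) (x y : Md D β)
    (h : CloseLE LL (Md D β) s x y) : x.c ≤ y.c + s ∧ y.c ≤ x.c + s := by
  induction s generalizing y with
  | zero => cases h; simp
  | succ s ih =>
    rcases h with h | ⟨c, h, hc⟩
    · have := ih y h; omega
    · have := ih c h
      have := adj_col c y hc
      omega

def lift {D' : ℕ → ℕ → Prop} (hD : ∀ c s, D' c s → D c s) (x : Md D' β) : Md D β :=
  ⟨x.c, x.s, hD _ _ x.ok⟩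

lemma sub_emb {D' : ℕ → ℕ → Prop} (hD : ∀ c s, D' c s → D c s)
    {k r : ℕ} (a : Fin k → Md D' β)
    (hc : ∀ i c s, D c s → c ≤ (a i).c + r → (a i).c ≤ c + r → D' c s)
    (τ : LL.Formula (Fin k)) (hτ : IsLocal r τ) :
    τ.Realize a ↔ τ.Realize (lift hD ∘ a) := by
  refine local_emb (M := Md D' β) (N := Md D β) (lift hD) ?_ ?_ a ?_ τ hτ
  · intro x y h
    have h1 : (lift hD x).c = (lift hD y).c := by rw [h]
    have h2 : (lift hD x).s = (lift hD y).s := by rw [h]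
    exact Md.ext h1 h2
  · intro s x y
    exact Iff.rfl
  · intro i s hs x hx y hy
    have h1 := close_col s _ _ hx
    have h2 := adj_col _ _ hy
    have e : (lift hD x).c = x.c := rfl
    exact ⟨⟨y.c, y.s, hc i _ _ y.ok (by omega) (by omega)⟩, rfl⟩

end md

def DD (m : ℕ) (rows : ℕ → ℕ) (c s : ℕ) : Prop := c ≤ m ∧ s ≤ rows c

lemma finite_md (m : ℕ) (rows : ℕ → ℕ) (β : ℕ → Prop) : Finite (Md (DD m rows) β) := by
  let f : Md (DD m rows) β → Σ c : Fin (m+1), Fin (rows c + 1) :=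
    fun x => ⟨⟨x.c, Nat.lt_succ_of_le x.ok.1⟩, ⟨x.s, Nat.lt_succ_of_le x.ok.2⟩⟩
  refine Finite.of_injective f ?_
  rintro ⟨c, s, h⟩ ⟨c', s', h'⟩ e
  simp only [f, Sigma.mk.injEq, Fin.mk.injEq] at e
  obtain ⟨rfl, e⟩ := e
  have := eq_of_heq e
  simp only [Fin.mk.injEq] at this
  subst this
  rfl

lemma md_U (m : ℕ) (rows : ℕ → ℕ) (β : ℕ → Prop) (h1 : ∀ c ≤ m, c ≤ rows c) (h2 : rows m = m)
    (h3 : ∀ c < m, ¬ β c → rows (c+1) = rows c) : U (Md (DD m rows) β) := by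
  have ok1 : ∀ x : Md (DD m rows) β, x.c ≤ m := fun x => x.ok.1
  have ok2 : ∀ x : Md (DD m rows) β, x.s ≤ rows x.c := fun x => x.ok.2
  refine ⟨?_, ?_, ?_, ?_, ?_, ?_⟩
  · intro x hx ⟨e, he⟩
    simp only [rl0, rl2] at hx he
    have := ok1 x
    refine ⟨⟨x.c-1, 0, by omega, by omega⟩, ?_⟩
    simp only [rl0, rl4, true_and, and_true]
    omega
  · intro x hx hb ⟨e, he⟩
    simp only [rl0, rl3] at hx he
    have a1 := ok1 x
    have a2 := ok2 e
    have : x.c ≠ m := by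
      intro h
      rw [he.2.1, h, h2] at a2
      omega
    refine ⟨⟨x.c+1, 0, by omega, by omega⟩, ?_⟩
    simp only [rl0, rl4, true_and, and_true]
    omega
  · intro x y z a1 a2 a3 a4 a5
    simp only [rl0, rl4] at a1 a2 a3 a4 a5
    apply Md.ext <;> omega
  · intro x y a1 a2 a3 a4
    have key : ∀ x : Md (DD m rows) β, rl 0 x x → (¬ ∃ e, rl 2 x e) → x.c = 0 := by
      intro x hx hn
      simp only [rl0] at hx
      by_contra h0
      have := h1 x.c (ok1 x)
      refine hn ⟨⟨x.c, 1, ok1 x, by omega⟩, ?_⟩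
      simp only [rl2, true_and, and_true]
      omega
    have k1 := key _ a1 a3
    have k2 := key _ a2 a4
    simp only [rl0] at a1 a2
    apply Md.ext <;> omega
  · intro x y a1 a2 a3
    simp only [rl0, rl4] at a1 a2 a3
    have o1 := ok1 x
    have o2 := ok1 y
    have g1 := h1 _ o1
    have g2 := h1 _ o2
    refine ⟨⟨y.c, y.c, o2, g2⟩, ?_, ?_, ?_, ?_, ?_⟩
    · simp only [rl2, true_and, and_true]; omega
    · intro e he
      simp only [rl2] at he
      refine ⟨⟨y.c, e.s, o2, by omega⟩, ?_, ?_, ?_⟩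
      · simp only [rl2, true_and, and_true]; omega
      · intro h
        have := congrArg Md.s h
        simp only at this; omega
      · simp only [rl5, true_and, and_true]; omega
    · intro e he hne
      simp only [rl2] at he
      have : e.s ≠ y.c := fun h => hne (Md.ext he.2.1 h)
      refine ⟨⟨x.c, e.s, o1, by omega⟩, ?_, ?_⟩
      · simp only [rl2, true_and, and_true]; omega
      · simp only [rl5, true_and, and_true]; omega
    · intro e e1 e2 b1 b2 b3 b4 b5 b6 b7
      simp only [rl2, rl5] at b1 b2 b3 b6 b7
      apply Md.ext <;> omega
    · intro e e1 e2 b1 b2 b3 b4 b6 b7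
      simp only [rl2, rl5] at b1 b2 b3 b6 b7
      apply Md.ext <;> omega
  · intro x y a1 a2 a3 hb
    simp only [rl0, rl1, rl4] at a1 a2 a3 hb
    have hb' : ¬ β x.c := fun h => hb ⟨trivial, a1.2.1, a1.2.1, h⟩
    have o1 := ok1 x
    have o2 := ok1 y
    have g1 := h1 _ o1
    have g2 := h1 _ o2
    have g3 := h3 x.c (by omega) hb'
    rw [← a3.2.2] at g3
    refine ⟨⟨x.c, x.c+1, o1, by omega⟩, ?_, ?_, ?_, ?_, ?_⟩
    · simp only [rl3, true_and, and_true]; omega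
    · intro e he
      simp only [rl3] at he
      have q := ok2 e
      rw [he.2.1] at q
      refine ⟨⟨x.c, e.s, o1, by omega⟩, ?_, ?_, ?_⟩
      · simp only [rl3, true_and, and_true]; omega
      · intro h
        have := congrArg Md.s h
        simp only at this; omega
      · simp only [rl5, true_and, and_true]; omega
    · intro e he hne
      simp only [rl3] at he
      have : e.s ≠ x.c + 1 := fun h => hne (Md.ext he.2.1 h)
      have q := ok2 e
      rw [he.2.1] at q
      refine ⟨⟨y.c, e.s, o2, by omega⟩, ?_, ?_⟩
      · simp only [rl3, true_and, and_true]; omega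
      · simp only [rl5, true_and, and_true]; omega
    · intro e e1 e2 b1 b2 b3 b4 b5 b6 b7
      simp only [rl3, rl5] at b1 b2 b3 b6 b7
      apply Md.ext <;> omega
    · intro e e1 e2 b1 b2 b3 b4 b6 b7
      simp only [rl3, rl5] at b1 b2 b3 b6 b7
      apply Md.ext <;> omega

/-! The game -/

def GoodR (g D : ℕ) (ρ : Finset (ℕ × ℕ)) : Prop :=
  (∀ x ∈ ρ, 1 ≤ x.1 ∧ x.1 ≤ g ∧ 1 ≤ x.2 ∧ x.2 ≤ g + D) ∧
  (∀ x ∈ ρ, ∀ y ∈ ρ, (x.1 = y.1 ↔ x.2 = y.2))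

def rr (g D : ℕ) (ρ : Finset (ℕ × ℕ)) (s t : ℕ) : Prop :=
  (s = 0 ∧ t = 0) ∨ (g < s ∧ t = s + D) ∨ (s, t) ∈ ρ

def mt (g D : ℕ) (ρ : Finset (ℕ × ℕ)) (c s d t : ℕ) : Prop :=
  (c < g ∧ d = c ∧ t = s) ∨ (g < c ∧ d = c + D ∧ rr g D ρ s t)

lemma rr_cases {g D : ℕ} {ρ : Finset (ℕ × ℕ)} (h : GoodR g D ρ) {s t : ℕ} (hr : rr g D ρ s t) :
    (s = 0 ∧ t = 0) ∨ (g < s ∧ t = s + D) ∨ (1 ≤ s ∧ s ≤ g ∧ 1 ≤ t ∧ t ≤ g + D) := by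
  rcases hr with hr | hr | hr
  · exact Or.inl hr
  · exact Or.inr (Or.inl hr)
  · exact Or.inr (Or.inr (h.1 _ hr))

lemma rr_eq {g D : ℕ} {ρ : Finset (ℕ × ℕ)} (h : GoodR g D ρ) {s t s' t' : ℕ}
    (hr : rr g D ρ s t) (hr' : rr g D ρ s' t') : s = s' ↔ t = t' := by
  have k1 := rr_cases h hr
  have k2 := rr_cases h hr'
  rcases hr with a | a | a
  · omega
  · omega
  · rcases hr' with b | b | b
    · omega
    · omega
    · exact h.2 _ a _ b

lemma rr_mono {g D : ℕ} {ρ ρ' : Finset (ℕ × ℕ)} (h : ρ ⊆ ρ') {s t : ℕ} (hr : rr g D ρ s t) :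
    rr g D ρ' s t := by
  rcases hr with a | a | a
  · exact Or.inl a
  · exact Or.inr (Or.inl a)
  · exact Or.inr (Or.inr (h a))

lemma mt_mono {g D : ℕ} {ρ ρ' : Finset (ℕ × ℕ)} (h : ρ ⊆ ρ') {c s d t : ℕ}
    (hr : mt g D ρ c s d t) : mt g D ρ' c s d t := by
  rcases hr with a | ⟨a, b, c⟩
  · exact Or.inl a
  · exact Or.inr ⟨a, b, rr_mono h c⟩

lemma good_insert {g D : ℕ} {ρ : Finset (ℕ × ℕ)} (h : GoodR g D ρ) {s t : ℕ}
    (h1 : 1 ≤ s ∧ s ≤ g ∧ 1 ≤ t ∧ t ≤ g + D) (hs : s ∉ ρ.image Prod.fst)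
    (ht : t ∉ ρ.image Prod.snd) : GoodR g D (insert (s, t) ρ) := by
  have hs' : ∀ x ∈ ρ, x.1 ≠ s := fun x hx e => hs (Finset.mem_image.2 ⟨x, hx, e⟩)
  have ht' : ∀ x ∈ ρ, x.2 ≠ t := fun x hx e => ht (Finset.mem_image.2 ⟨x, hx, e⟩)
  constructor
  · intro x hx
    rcases Finset.mem_insert.1 hx with rfl | hx
    · exact h1
    · exact h.1 x hx
  · intro x hx y hy
    rcases Finset.mem_insert.1 hx with rfl | hx <;> rcases Finset.mem_insert.1 hy with rfl | hy
    · simp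
    · have := hs' y hy
      have := ht' y hy
      simp only
      constructor <;> intro h <;> omega
    · have := hs' x hx
      have := ht' x hx
      simp only
      constructor <;> intro h <;> omega
    · exact h.2 x hx y hy

lemma fresh (N : ℕ) (S : Finset ℕ) (h : S.card < N) : ∃ t, 1 ≤ t ∧ t ≤ N ∧ t ∉ S := by
  by_contra hc
  push Not at hc
  have : Finset.Icc 1 N ⊆ S := by
    intro t ht
    rw [Finset.mem_Icc] at ht
    exact hc t ht.1 ht.2
  have := Finset.card_le_card this
  simp at this
  omega

lemma rr_forth {g D n : ℕ} {ρ : Finset (ℕ × ℕ)} (h : GoodR g D ρ) (hc : ρ.card < g)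
    (hn : g < n) (s : ℕ) (hs : s ≤ n) :
    ∃ t ρ', ρ ⊆ ρ' ∧ ρ'.card ≤ ρ.card + 1 ∧ GoodR g D ρ' ∧ rr g D ρ' s t ∧ t ≤ n + D := by
  by_cases h0 : s = 0
  · exact ⟨0, ρ, subset_rfl, by omega, h, Or.inl ⟨h0, rfl⟩, by omega⟩
  by_cases h1 : g < s
  · exact ⟨s + D, ρ, subset_rfl, by omega, h, Or.inr (Or.inl ⟨h1, rfl⟩), by omega⟩
  by_cases h2 : s ∈ ρ.image Prod.fst
  · obtain ⟨⟨s', t⟩, hx, rfl⟩ := Finset.mem_image.1 h2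
    have := h.1 _ hx
    simp only at this
    exact ⟨t, ρ, subset_rfl, by omega, h, Or.inr (Or.inr hx), by omega⟩
  · obtain ⟨t, t1, t2, t3⟩ := fresh (g + D) (ρ.image Prod.snd)
      (lt_of_le_of_lt Finset.card_image_le (by omega))
    exact ⟨t, insert (s, t) ρ, Finset.subset_insert _ _, Finset.card_insert_le _ _,
      good_insert h ⟨by omega, by omega, t1, t2⟩ h2 t3,
      Or.inr (Or.inr (Finset.mem_insert_self _ _)), by omega⟩

lemma rr_back {g D n : ℕ} {ρ : Finset (ℕ × ℕ)} (h : GoodR g D ρ) (hc : ρ.card < g)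
    (hn : g < n) (t : ℕ) (ht : t ≤ n + D) :
    ∃ s ρ', ρ ⊆ ρ' ∧ ρ'.card ≤ ρ.card + 1 ∧ GoodR g D ρ' ∧ rr g D ρ' s t ∧ s ≤ n := by
  by_cases h0 : t = 0
  · exact ⟨0, ρ, subset_rfl, by omega, h, Or.inl ⟨rfl, h0⟩, by omega⟩
  by_cases h1 : g + D < t
  · exact ⟨t - D, ρ, subset_rfl, by omega, h, Or.inr (Or.inl ⟨by omega, by omega⟩), by omega⟩
  by_cases h2 : t ∈ ρ.image Prod.snd
  · obtain ⟨⟨s, t'⟩, hx, rfl⟩ := Finset.mem_image.1 h2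
    have := h.1 _ hx
    simp only at this
    exact ⟨s, ρ, subset_rfl, by omega, h, Or.inr (Or.inr hx), by omega⟩
  · obtain ⟨s, t1, t2, t3⟩ := fresh g (ρ.image Prod.fst)
      (lt_of_le_of_lt Finset.card_image_le (by omega))
    exact ⟨s, insert (s, t) ρ, Finset.subset_insert _ _, Finset.card_insert_le _ _,
      good_insert h ⟨by omega, by omega, by omega, by omega⟩ t3 h2,
      Or.inr (Or.inr (Finset.mem_insert_self _ _)), by omega⟩

def DA (g n c s : ℕ) : Prop := c ≤ n ∧ s ≤ n ∧ c ≠ g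
def DB (g D n c s : ℕ) : Prop := (c < g ∧ s ≤ n) ∨ (g + D < c ∧ c ≤ n + D ∧ s ≤ n + D)

abbrev MA (g n : ℕ) := Md (DA g n) (fun _ => False)
abbrev MB (g D n j : ℕ) := Md (DB g D n) (fun c => c = j)

lemma mt_rel {g D j : ℕ} (hj : g ≤ j ∧ j ≤ g + D) {ρ : Finset (ℕ × ℕ)} (h : GoodR g D ρ)
    {c s d t c' s' d' t' : ℕ} (h1 : mt g D ρ c s d t) (h2 : mt g D ρ c' s' d' t') (i : Fin 6) :
    RN (fun _ => False) i c s c' s' ↔ RN (fun c => c = j) i d t d' t' := by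
  rcases h1 with h1 | ⟨a1, a2, a3⟩ <;> rcases h2 with h2 | ⟨b1, b2, b3⟩
  · fin_cases i <;> simp only [RN, and_false, false_iff, not_and] <;> omega
  · have k2 := rr_cases h b3
    fin_cases i <;> simp only [RN, and_false, false_iff, not_and] <;> omega
  · have k2 := rr_cases h a3
    fin_cases i <;> simp only [RN, and_false, false_iff, not_and] <;> omega
  · have k1 := rr_cases h a3
    have k2 := rr_cases h b3
    have k3 := rr_eq h a3 b3
    fin_cases i <;> simp only [RN, and_false, false_iff, not_and] <;> omega

lemma game {g D n j : ℕ} (hj : g ≤ j ∧ j ≤ g + D) (hn : g < n) {k q : ℕ} (hk : k + q ≤ g)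
    (τ : LL.Formula (Fin k)) (hq : qr τ ≤ q) (a : Fin k → MA g n) (b : Fin k → MB g D n j)
    (hab : ∀ i, ((a i).c < g ∧ (b i).c = (a i).c ∧ (b i).s = (a i).s) ∨
      (g < (a i).c ∧ (b i).c = (a i).c + D ∧
        (b i).s = if (a i).s ≤ g then (a i).s else (a i).s + D)) :
    τ.Realize a ↔ τ.Realize b := by
  classical
  let I : ℕ → Set (Set (MA g n × MB g D n j)) := fun kk => {p | ∃ ρ : Finset (ℕ × ℕ),
    ρ.card + kk ≤ g ∧ GoodR g D ρ ∧ ∀ x ∈ p, mt g D ρ x.1.c x.1.s x.2.c x.2.s}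
  refine ef I ?_ ?_ ?_ ?_ τ q (Set.range fun i => (a i, b i)) ?_ hq a b _ _
    (fun i => ⟨i, rfl⟩) (fun i => i.elim0)
  · rintro kk p ⟨ρ, -, hg, hp⟩ x hx y hy
    rw [Md.ext_iff, Md.ext_iff]
    have h1 := hp x hx
    have h2 := hp y hy
    rcases h1 with h1 | ⟨a1, a2, a3⟩ <;> rcases h2 with h2 | ⟨b1, b2, b3⟩
    · omega
    · omega
    · omega
    · have := rr_eq hg a3 b3
      omega
  · rintro kk p ⟨ρ, -, hg, hp⟩ x hx y hy i
    exact mt_rel hj hg (hp x hx) (hp y hy) i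
  · rintro kk p ⟨ρ, hc, hg, hp⟩ x
    obtain ⟨o1, o2, o3⟩ := x.ok
    rcases lt_or_gt_of_ne o3 with hlt | hgt
    · refine ⟨⟨x.c, x.s, Or.inl ⟨hlt, o2⟩⟩, ρ, by omega, hg, ?_⟩
      rintro z (rfl | hz)
      · exact Or.inl ⟨hlt, rfl, rfl⟩
      · exact hp z hz
    · obtain ⟨t, ρ', s1, s2, s3, s4, s5⟩ := rr_forth hg (by omega) hn x.s o2
      refine ⟨⟨x.c + D, t, Or.inr ⟨by omega, by omega, s5⟩⟩, ρ', by omega, s3, ?_⟩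
      rintro z (rfl | hz)
      · exact Or.inr ⟨hgt, rfl, s4⟩
      · exact mt_mono s1 (hp z hz)
  · rintro kk p ⟨ρ, hc, hg, hp⟩ y
    rcases y.ok with ⟨hlt, o2⟩ | ⟨hgt, o1, o2⟩
    · refine ⟨⟨y.c, y.s, by omega, o2, by omega⟩, ρ, by omega, hg, ?_⟩
      rintro z (rfl | hz)
      · exact Or.inl ⟨hlt, rfl, rfl⟩
      · exact hp z hz
    · obtain ⟨s, ρ', s1, s2, s3, s4, s5⟩ := rr_back hg (by omega) hn y.s o2
      refine ⟨⟨y.c - D, s, by omega, s5, by omega⟩, ρ', by omega, s3, ?_⟩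
      rintro z (rfl | hz)
      · refine Or.inr ⟨?_, ?_, s4⟩ <;> simp only <;> omega
      · exact mt_mono s1 (hp z hz)
  · refine ⟨((Finset.univ : Finset (Fin k)).filter (fun i => 1 ≤ (a i).s ∧ (a i).s ≤ g)).image
      (fun i => ((a i).s, (a i).s)), ?_, ?_, ?_⟩
    · have h1 := Finset.card_image_le
        (s := (Finset.univ : Finset (Fin k)).filter (fun i => 1 ≤ (a i).s ∧ (a i).s ≤ g))
        (f := fun i => ((a i).s, (a i).s))
      have h2 := Finset.card_filter_le (Finset.univ : Finset (Fin k))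
        (fun i => 1 ≤ (a i).s ∧ (a i).s ≤ g)
      rw [Finset.card_univ, Fintype.card_fin] at h2
      omega
    · constructor
      · intro x hx
        obtain ⟨i, hi, rfl⟩ := Finset.mem_image.1 hx
        have := (Finset.mem_filter.1 hi).2
        simp only
        omega
      · intro x hx y hy
        obtain ⟨i, hi, rfl⟩ := Finset.mem_image.1 hx
        obtain ⟨i', hi', rfl⟩ := Finset.mem_image.1 hy
        rfl
    · rintro x ⟨i, rfl⟩
      rcases hab i with h | ⟨h1, h2, h3⟩
      · exact Or.inl h
      · refine Or.inr ⟨h1, h2, ?_⟩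
        simp only
        by_cases h0 : (a i).s = 0
        · left
          simp [h0] at h3
          exact ⟨h0, h3⟩
        · right
          by_cases h4 : (a i).s ≤ g
          · right
            rw [if_pos h4] at h3
            rw [h3]
            exact Finset.mem_image.2 ⟨i, Finset.mem_filter.2 ⟨Finset.mem_univ _, by omega, h4⟩, rfl⟩
          · left
            rw [if_neg h4] at h3
            exact ⟨by omega, h3⟩

lemma gap {k r w : ℕ} (c : Fin k → ℕ) : ∃ g, w ≤ g ∧ g ≤ w + k * (2 * r + 1) ∧
    ∀ i, c i + r < g ∨ g + r < c i := by
  classical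
  by_contra hc
  push Not at hc
  have hsub : Finset.Icc w (w + k * (2 * r + 1)) ⊆
      Finset.univ.biUnion (fun i => Finset.Icc (c i - r) (c i + r)) := by
    intro g hg
    rw [Finset.mem_Icc] at hg
    obtain ⟨i, h1, h2⟩ := hc g hg.1 hg.2
    rw [Finset.mem_biUnion]
    exact ⟨i, Finset.mem_univ _, Finset.mem_Icc.2 ⟨by omega, by omega⟩⟩
  have h1 := Finset.card_le_card hsub
  have h2 : (Finset.univ.biUnion (fun i => Finset.Icc (c i - r) (c i + r))).card
      ≤ (Finset.univ : Finset (Fin k)).card * (2 * r + 1) := by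
    apply Finset.card_biUnion_le_card_mul
    intro i _
    rw [Nat.card_Icc]
    omega
  rw [Finset.card_univ, Fintype.card_fin] at h2
  rw [Nat.card_Icc] at h1
  omega

lemma not_equiv (k r : ℕ) (τ : LL.Formula (Fin k)) (hτ : IsLocal r τ)
    (h : ∀ (M : Type) [LL.Structure M], Finite M → (Phi M ↔ ∃ a : Fin k → M, τ.Realize a)) :
    False := by
  obtain ⟨W, hW⟩ : ∃ W, W = k * (2 * r + 1) := ⟨_, rfl⟩
  obtain ⟨w, hw⟩ : ∃ w, w = k + qr τ := ⟨_, rfl⟩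
  obtain ⟨n, hn⟩ : ∃ n, n = w + W + 1 := ⟨_, rfl⟩
  obtain ⟨j, hj⟩ : ∃ j, j = w + W := ⟨_, rfl⟩
  have hA : Phi (Md (DD n (fun _ => n)) (fun _ => False)) := by
    intro _
    refine ⟨⟨⟨0, 0, by omega, by omega⟩, rfl, rfl, rfl⟩, ?_⟩
    rintro ⟨x, -, hx⟩
    exact hx.2.2.2
  have hB : ¬ Phi (Md (DD (n + W) (fun c => if c ≤ j then n else n + W)) (fun c => c = j)) := by
    intro hP
    refine (hP (md_U _ _ _ ?_ ?_ ?_)).2 ⟨⟨j, 0, by omega, by omega⟩, ⟨rfl, rfl, rfl⟩,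
      ⟨rfl, rfl, rfl, rfl⟩⟩
    · intro c hc
      split_ifs <;> omega
    · split_ifs <;> omega
    · intro c hc hne
      split_ifs <;> omega
  obtain ⟨a, ha⟩ := (h _ (finite_md _ _ _)).1 hA
  apply hB
  rw [h _ (finite_md _ _ _)]
  obtain ⟨g, g1, g2, g3⟩ := gap (r := r) (w := w) (fun i => (a i).c)
  rw [← hW] at g2
  have oka : ∀ i, (a i).c ≤ n ∧ (a i).s ≤ n := fun i => (a i).ok
  let a' : Fin k → MA g n := fun i =>
    ⟨(a i).c, (a i).s, (oka i).1, (oka i).2, by have := g3 i; omega⟩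
  have e1 := sub_emb (D := DD n (fun _ => n)) (fun c s (hcs : DA g n c s) => ⟨hcs.1, hcs.2.1⟩)
    (r := r) a' (by
      intro i c s hcs h1 h2
      have e : (a' i).c = (a i).c := rfl
      have := g3 i
      exact ⟨hcs.1, hcs.2, by omega⟩) τ hτ
  have ha' : τ.Realize a' := e1.2 ha
  let b : Fin k → MB g W n j := fun i =>
    if hlt : (a i).c < g then ⟨(a i).c, (a i).s, Or.inl ⟨hlt, (oka i).2⟩⟩
    else ⟨(a i).c + W, if (a i).s ≤ g then (a i).s else (a i).s + W, Or.inr (by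
      have := g3 i
      have := oka i
      refine ⟨by omega, by omega, ?_⟩
      split_ifs <;> omega)⟩
  have hab : ∀ i, ((a i).c < g ∧ (b i).c = (a i).c ∧ (b i).s = (a i).s) ∨
      (g < (a i).c ∧ (b i).c = (a i).c + W ∧
        (b i).s = if (a i).s ≤ g then (a i).s else (a i).s + W) := by
    intro i
    by_cases hlt : (a i).c < g
    · left
      simp only [b, dif_pos hlt]
      exact ⟨hlt, trivial, trivial⟩
    · right
      have := g3 i
      simp only [b, dif_neg hlt]
      exact ⟨by omega, trivial, trivial⟩
  have hb : τ.Realize b := (game (j := j) ⟨by omega, by omega⟩ (by omega) (by omega) τ le_rfl a' b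
    hab).1 ha'
  have hD : ∀ c s, DB g W n c s → DD (n + W) (fun c => if c ≤ j then n else n + W) c s := by
    rintro c s (⟨h1, h2⟩ | ⟨h1, h2, h3⟩)
    · refine ⟨by omega, ?_⟩
      change s ≤ if c ≤ j then n else n + W
      rw [if_pos (by omega)]; exact h2
    · refine ⟨by omega, ?_⟩
      change s ≤ if c ≤ j then n else n + W
      rw [if_neg (by omega)]; exact h3
  refine ⟨_, (sub_emb hD (r := r) b ?_ τ hτ).1 hb⟩
  rintro i c s ⟨h1, h2⟩ h3 h4
  have k1 := hab i
  have k2 := g3 i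
  by_cases hc : c < g
  · left
    simp only at h2
    rw [if_pos (by omega)] at h2
    exact ⟨hc, h2⟩
  · right
    simp only at h2
    have : g + W < c := by omega
    rw [if_neg (by omega)] at h2
    exact ⟨by omega, h1, h2⟩

end FailQR

/-- **Failure at arbitrary quantifier rank.** There is a finite relational signature such that
for every `r ≥ 1` and `k ≥ 2` there is a sentence preserved under `≼_{r,∞,k}` over the class
of all finite structures which is not equivalent over that class to any existential local
sentence. -/
theorem failure_at_arbitrary_quantifier_rank :
    ∃ (L : FirstOrder.Language.{0, 0}) (rel : L.IsRelational),
      Finite (Σ n, L.Relations n) ∧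
      (letI := rel
       ∀ r k : ℕ, 1 ≤ r → 2 ≤ k →
        ∃ φ : L.Sentence,
          (∀ (A B : Type) [L.Structure A] [L.Structure B], Finite A → Finite B →
            A ⊨ φ → (∀ q : ℕ, LocLE L r q k A B) → B ⊨ φ) ∧
          ¬ ∃ (k' r' : ℕ) (τ : L.Formula (Fin k')), IsLocal r' τ ∧
              ∀ (M : Type) [L.Structure M], Finite M →
                (M ⊨ φ ↔ ∃ a : Fin k' → M, τ.Realize a)) := by
  refine ⟨FailQR.LL, FailQR.instRel, FailQR.finite_rels, fun r k hr hk =>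
    ⟨FailQR.phiF, ?_, ?_⟩⟩
  · intro A B _ _ hA hB hAφ hle
    haveI := hA
    haveI := hB
    rw [FailQR.realize_phiF] at hAφ ⊢
    exact FailQR.preserved (FailQR.trans_of_locLE hr hk hle) hAφ
  · rintro ⟨k', r', τ, hτ, h⟩
    refine FailQR.not_equiv k' r' τ hτ ?_
    intro M _ hM
    rw [← FailQR.realize_phiF]
    exact h M hM
end
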